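/- arXiv:2602.22081 — 7 statements merged into one kernel-verified Lean document; each statement's English description precedes it below -/
import Mathlib

section
/- Let M, L, L', w be positive integers such that w > M ≥ 3, M divides w, L = (2w/M - 1)·L', and every prime factor of L' is at least 2w - 1. If there exists an equi-difference CAC of length L' and weight w with (L' - 1)/(2w - 2) codewords, then there exists an MC-CAC of length L and weight w in M channels having M(M-1)L/((2w-M)(w-1)) + M(L-1)/(2w-2) codewords. -/
/-- The set of nonzero differences of a subset `S ⊆ Z_L`. -/
def dstar {L : ℕ} (S : Finset (ZMod L)) : Finset (ZMod L) :=
  ((S ×ˢ S).image fun p => p.1 - p.2).erase 0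

/-- A conflict-avoiding code of length `L` and weight `w`. -/
def IsCAC (L w : ℕ) (C : Finset (Finset (ZMod L))) : Prop :=
  (∀ S ∈ C, S.card = w) ∧
  ∀ S ∈ C, ∀ S' ∈ C, S ≠ S' → Disjoint (dstar S) (dstar S')

/-- A codeword is equi-difference if it is of the form `{0, g, 2g, …, (w-1)g}`. -/
def IsEquiDiff {L : ℕ} (w : ℕ) (S : Finset (ZMod L)) : Prop :=
  ∃ g : ZMod L, S = (Finset.range w).image fun j : ℕ => (j : ZMod L) * g

/-- The set of time slots used by codeword `S` on channel `i`. -/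
def chan {M L : ℕ} (S : Finset (Fin M × ZMod L)) (i : Fin M) : Finset (ZMod L) :=
  (S.filter fun p => p.1 = i).image Prod.snd

/-- The `(i,j)` set of differences of a codeword `S ⊆ {1,…,M} × Z_L`
(with `0` removed when `i = j`). -/
def Darr {M L : ℕ} (S : Finset (Fin M × ZMod L)) (i j : Fin M) : Finset (ZMod L) :=
  if i = j then (((chan S i) ×ˢ (chan S j)).image fun p => p.1 - p.2).erase 0
  else ((chan S i) ×ˢ (chan S j)).image fun p => p.1 - p.2

/-- A multichannel conflict-avoiding code of length `L` and weight `w` in `M` channels. -/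
def IsMCCAC (M L w : ℕ) (C : Finset (Finset (Fin M × ZMod L))) : Prop :=
  (∀ S ∈ C, S.card = w) ∧
  ∀ S ∈ C, ∀ S' ∈ C, S ≠ S' → ∀ i j : Fin M, Disjoint (Darr S i j) (Darr S' i j)

theorem mem_Darr_iff {M L : ℕ} (S : Finset (Fin M × ZMod L)) (i j : Fin M) (z : ZMod L) :
    z ∈ Darr S i j ↔ (∃ s t, (i, s) ∈ S ∧ (j, t) ∈ S ∧ s - t = z) ∧ (i = j → z ≠ 0) := by
  have hc : ∀ (i : Fin M) (s : ZMod L), s ∈ chan S i ↔ (i, s) ∈ S := by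
    intro i s
    simp only [chan, Finset.mem_image, Finset.mem_filter]
    constructor
    · rintro ⟨⟨a, b⟩, ⟨h1, h2⟩, h3⟩
      simp only at h2 h3
      subst h2; subst h3; exact h1
    · intro h; exact ⟨(i, s), ⟨h, rfl⟩, rfl⟩
  unfold Darr
  split_ifs with h
  · simp only [Finset.mem_erase, Finset.mem_image, Finset.mem_product, hc, Prod.exists]
    constructor
    · rintro ⟨h0, s, t, ⟨h1, h2⟩, h3⟩
      exact ⟨⟨s, t, h1, h2, h3⟩, fun _ => h0⟩
    · rintro ⟨⟨s, t, h1, h2, h3⟩, h0⟩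
      exact ⟨h0 h, s, t, ⟨h1, h2⟩, h3⟩
  · simp only [Finset.mem_image, Finset.mem_product, hc, Prod.exists]
    constructor
    · rintro ⟨s, t, ⟨h1, h2⟩, h3⟩
      exact ⟨⟨s, t, h1, h2, h3⟩, fun h' => absurd h' h⟩
    · rintro ⟨⟨s, t, h1, h2, h3⟩, h0⟩
      exact ⟨s, t, ⟨h1, h2⟩, h3⟩

theorem cast_inj_aux (k : ℕ) (hk : 2 ≤ k) (d d' : ℤ) (h1 : |d| < k) (h2 : |d'| < k)
    (h : (d : ZMod (2 * k - 1)) = (d' : ZMod (2 * k - 1))) : d = d' := by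
  rw [ZMod.intCast_eq_intCast_iff_dvd_sub] at h
  rw [abs_lt] at h1 h2
  have : d' - d = 0 := by
    apply Int.eq_zero_of_abs_lt_dvd h
    rw [abs_lt]
    omega
  omega

theorem unit_aux (w L' : ℕ) (hL' : 0 < L')
    (hprime : ∀ p : ℕ, p.Prime → p ∣ L' → 2 * w - 1 ≤ p) (u : ℤ) (hu : u ≠ 0)
    (huw : |u| < w) : IsUnit (u : ZMod L') := by
  have hc : Nat.Coprime u.natAbs L' := by
    apply Nat.Coprime.symm
    apply Nat.coprime_of_dvd
    intro p hp h1 h2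
    have := hprime p hp h1
    have h3 := Nat.le_of_dvd (by omega) h2
    rw [abs_lt] at huw
    omega
  have h2 : IsUnit ((u.natAbs : ℕ) : ZMod L') := (ZMod.isUnit_iff_coprime _ _).2 hc
  rcases Int.natAbs_eq u with h | h
  · rw [h]; simpa using h2
  · rw [h]; simpa using h2

theorem stmt_10 (M L L' w : ℕ) (hM : 3 ≤ M) (hMw : M < w) (hdvd : M ∣ w)
    (hL' : 0 < L') (hL : L = (2 * (w / M) - 1) * L')
    (hprime : ∀ p : ℕ, p.Prime → p ∣ L' → 2 * w - 1 ≤ p)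
    (hCAC : ∃ C' : Finset (Finset (ZMod L')),
      IsCAC L' w C' ∧ (∀ S ∈ C', IsEquiDiff w S) ∧ C'.card * (2 * w - 2) = L' - 1) :
    ∃ C : Finset (Finset (Fin M × ZMod L)), IsMCCAC M L w C ∧
      (C.card : ℝ) =
        (M : ℝ) * ((M : ℝ) - 1) * (L : ℝ) / ((2 * (w : ℝ) - (M : ℝ)) * ((w : ℝ) - 1))
        + (M : ℝ) * ((L : ℝ) - 1) / (2 * (w : ℝ) - 2) := by
  classical
  obtain ⟨C', ⟨hcard, hdisj⟩, -, hcount⟩ := hCAC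
  obtain ⟨k, rfl⟩ := hdvd
  have hk : 2 ≤ k := by
    by_contra h
    have : k = 0 ∨ k = 1 := by omega
    rcases this with rfl | rfl <;> simp at hMw
  have hMk : M * k / M = k := Nat.mul_div_cancel_left k (by omega)
  rw [hMk] at hL
  have hkw : 3 * k ≤ M * k := Nat.mul_le_mul_right k hM
  have hcop : Nat.Coprime (2 * k - 1) L' := by
    apply Nat.Coprime.symm
    apply Nat.coprime_of_dvd
    intro p hp h1 h2
    have := hprime p hp h1
    have h3 := Nat.le_of_dvd (by omega) h2
    omega
  subst hL
  haveI : NeZero L' := ⟨by omega⟩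
  haveI : NeZero (2 * k - 1) := ⟨by omega⟩
  let e := ZMod.chineseRemainder hcop
  let A : ZMod L' → Finset (Fin M × ZMod ((2 * k - 1) * L')) := fun a =>
    (Finset.univ : Finset (Fin M × Fin k)).image fun n =>
      (n.1, e.symm (((n.2 : ℕ) : ZMod (2 * k - 1)),
        a * ((((n.2 : ℕ) : ℤ) + ((n.1 : ℕ) : ℤ) * k : ℤ) : ZMod L')))
  let B : Fin M × Finset (ZMod L') → Finset (Fin M × ZMod ((2 * k - 1) * L')) := fun p =>
    p.2.image fun s => (p.1, e.symm (0, s))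
  have hA : ∀ a i s, (i, s) ∈ A a ↔ ∃ x : Fin k, s = e.symm (((x : ℕ) : ZMod (2 * k - 1)),
        a * ((((x : ℕ) : ℤ) + ((i : ℕ) : ℤ) * k : ℤ) : ZMod L')) := by
    intro a i s
    simp only [A, Finset.mem_image, Finset.mem_univ, true_and, Prod.exists, Prod.mk.injEq]
    constructor
    · rintro ⟨i', x, rfl, rfl⟩; exact ⟨x, rfl⟩
    · rintro ⟨x, rfl⟩; exact ⟨i, x, rfl, rfl⟩
  have hB : ∀ i S j s, (j, s) ∈ B (i, S) ↔ j = i ∧ ∃ t ∈ S, s = e.symm (0, t) := by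
    intro i S j s
    simp only [B, Finset.mem_image, Prod.mk.injEq]
    constructor
    · rintro ⟨t, ht, rfl, rfl⟩; exact ⟨rfl, t, ht, rfl⟩
    · rintro ⟨rfl, t, ht, rfl⟩; exact ⟨t, ht, rfl, rfl⟩
  have hDA : ∀ a i j z, z ∈ Darr (A a) i j → ∃ d : ℤ, |d| < k ∧
      z = e.symm ((d : ZMod (2 * k - 1)), a * ((d + (((i : ℕ) : ℤ) - ((j : ℕ) : ℤ)) * k : ℤ) : ZMod L'))
      ∧ (i = j → d ≠ 0) := by
    intro a i j z hz
    rw [mem_Darr_iff] at hz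
    obtain ⟨⟨s, t, hs, ht, rfl⟩, h0⟩ := hz
    rw [hA] at hs ht
    obtain ⟨x, rfl⟩ := hs
    obtain ⟨y, rfl⟩ := ht
    have hx := x.2
    have hy := y.2
    have heq : e.symm (((x : ℕ) : ZMod (2 * k - 1)),
        a * ((((x : ℕ) : ℤ) + ((i : ℕ) : ℤ) * k : ℤ) : ZMod L')) -
        e.symm (((y : ℕ) : ZMod (2 * k - 1)),
        a * ((((y : ℕ) : ℤ) + ((j : ℕ) : ℤ) * k : ℤ) : ZMod L')) =
        e.symm (((((x : ℕ) : ℤ) - ((y : ℕ) : ℤ) : ℤ) : ZMod (2 * k - 1)),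
         a * (((((x : ℕ) : ℤ) - ((y : ℕ) : ℤ)) + (((i : ℕ) : ℤ) - ((j : ℕ) : ℤ)) * k : ℤ) : ZMod L')) := by
      rw [← map_sub]
      congr 1
      ext
      · simp
      · simp; ring
    refine ⟨((x : ℕ) : ℤ) - ((y : ℕ) : ℤ), ?_, heq, ?_⟩
    · rw [abs_lt]; omega
    · intro hij hd
      apply h0 hij
      rw [heq, hd, hij]
      have : ((((0 : ℤ) : ZMod (2 * k - 1)), a * ((0 + (((j : ℕ) : ℤ) - ((j : ℕ) : ℤ)) * k : ℤ) : ZMod L')) : ZMod (2 * k - 1) × ZMod L') = 0 := by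
        ext <;> simp
      rw [this, map_zero]
  have hAA : ∀ a a', a ≠ a' → ∀ i j, Disjoint (Darr (A a) i j) (Darr (A a') i j) := by
    intro a a' hne i j
    rw [Finset.disjoint_left]
    intro z h1 h2
    obtain ⟨d, hd, hz, hij⟩ := hDA _ _ _ _ h1
    obtain ⟨d', hd', hz', -⟩ := hDA _ _ _ _ h2
    rw [hz] at hz'
    have h3 := e.symm.injective hz'
    rw [Prod.mk.injEq] at h3
    obtain ⟨h3, h4⟩ := h3
    have := cast_inj_aux k hk d d' hd hd' h3
    subst this
    apply hne
    refine (unit_aux (M * k) L' hL' hprime _ ?_ ?_).mul_right_cancel h4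
    · intro h0
      by_cases hij' : i = j
      · apply hij hij'
        subst hij'
        simpa using h0
      · have hdv : (k : ℤ) ∣ d := ⟨-(((i : ℕ) : ℤ) - ((j : ℕ) : ℤ)), by linarith⟩
        have hd0 := Int.eq_zero_of_abs_lt_dvd hdv hd
        subst hd0
        have : ((i : ℕ) : ℤ) - ((j : ℕ) : ℤ) = 0 := by
          rcases mul_eq_zero.1 (by simpa using h0 : (((i : ℕ) : ℤ) - ((j : ℕ) : ℤ)) * (k : ℤ) = 0) with h | h
          · exact h
          · omega
        apply hij'
        ext
        omega
    · have hi := i.2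
      have hj := j.2
      rw [abs_lt] at hd ⊢
      have e1 : (((i : ℕ) : ℤ) - ((j : ℕ) : ℤ)) * k ≤ (M - 1 : ℤ) * k :=
        mul_le_mul_of_nonneg_right (by omega) (by omega)
      have e2 : -(M - 1 : ℤ) * k ≤ (((i : ℕ) : ℤ) - ((j : ℕ) : ℤ)) * k :=
        mul_le_mul_of_nonneg_right (by omega) (by omega)
      push_cast
      constructor <;> nlinarith
  have hDB : ∀ i S j j' z, z ∈ Darr (B (i, S)) j j' →
      j = i ∧ j' = i ∧ ∃ t ∈ dstar S, z = e.symm (0, t) := by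
    intro i S j j' z hz
    rw [mem_Darr_iff] at hz
    obtain ⟨⟨s, t, hs, ht, rfl⟩, h0⟩ := hz
    rw [hB] at hs ht
    obtain ⟨rfl, s, hs, rfl⟩ := hs
    obtain ⟨rfl, t, ht, rfl⟩ := ht
    have heq : e.symm (0, s) - e.symm (0, t) = e.symm (0, s - t) := by
      rw [← map_sub]; congr 1; ext <;> simp
    refine ⟨rfl, rfl, s - t, ?_, heq⟩
    unfold dstar
    rw [Finset.mem_erase, Finset.mem_image]
    refine ⟨?_, (s, t), Finset.mem_product.2 ⟨hs, ht⟩, rfl⟩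
    intro h
    apply h0 rfl
    rw [heq, h]
    exact map_zero e.symm
  have hAB : ∀ a i S j j', Disjoint (Darr (A a) j j') (Darr (B (i, S)) j j') := by
    intro a i S j j'
    rw [Finset.disjoint_left]
    intro z h1 h2
    obtain ⟨d, hd, hz, hij⟩ := hDA _ _ _ _ h1
    obtain ⟨rfl, rfl, t, ht, hz'⟩ := hDB _ _ _ _ _ h2
    rw [hz] at hz'
    have h3 := e.symm.injective hz'
    rw [Prod.mk.injEq] at h3
    exact hij rfl (cast_inj_aux k hk d 0 hd (by simp; omega) (by simpa using h3.1))
  have hBB : ∀ p ∈ (Finset.univ : Finset (Fin M)) ×ˢ C', ∀ q ∈ (Finset.univ : Finset (Fin M)) ×ˢ C', p ≠ q → ∀ j j', Disjoint (Darr (B p) j j') (Darr (B q) j j') := by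
    rintro ⟨i, S⟩ hp ⟨i', S'⟩ hq hne j j'
    rw [Finset.disjoint_left]
    intro z h1 h2
    obtain ⟨rfl, rfl, t, ht, hz⟩ := hDB _ _ _ _ _ h1
    obtain ⟨rfl, -, t', ht', hz'⟩ := hDB _ _ _ _ _ h2
    rw [hz] at hz'
    have h3 := e.symm.injective hz'
    rw [Prod.mk.injEq] at h3
    obtain ⟨-, rfl⟩ := h3
    have hSS : S ≠ S' := by rintro rfl; exact hne rfl
    exact Finset.disjoint_left.1 (hdisj S (Finset.mem_product.1 hp).2 S' (Finset.mem_product.1 hq).2 hSS) ht ht'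
  let i0 : Fin M := ⟨0, by omega⟩
  let i1 : Fin M := ⟨1, by omega⟩
  have h01 : i1 ≠ i0 := by simp [i0, i1]
  have hAmem : ∀ a i, ∃ s, (i, s) ∈ A a := fun a i => ⟨_, (hA a i _).2 ⟨⟨0, by omega⟩, rfl⟩⟩
  have hAinj : Function.Injective A := by
    intro a a' h
    by_contra hne
    have h1 := hAA a a' hne i1 i0
    rw [← h, disjoint_self] at h1
    obtain ⟨s, hs⟩ := hAmem a i1
    obtain ⟨t, ht⟩ := hAmem a i0
    have : s - t ∈ Darr (A a) i1 i0 :=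
      (mem_Darr_iff _ _ _ _).2 ⟨⟨s, t, hs, ht, rfl⟩, fun h => absurd h h01⟩
    rw [h1] at this
    simp at this
  have hAcard : ∀ a, (A a).card = M * k := by
    intro a
    rw [Finset.card_image_of_injective]
    · simp
    · rintro ⟨i, x⟩ ⟨j, y⟩ h
      simp only [Prod.mk.injEq] at h
      obtain ⟨rfl, h⟩ := h
      have h3 := e.symm.injective h
      rw [Prod.mk.injEq] at h3
      have := cast_inj_aux k hk ((x : ℕ) : ℤ) ((y : ℕ) : ℤ) (by simp) (by simp)
        (by simpa using h3.1)
      have : x = y := by ext; omega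
      rw [this]
  have hBcard : ∀ i, ∀ S ∈ C', (B (i, S)).card = M * k := by
    intro i S hS
    rw [Finset.card_image_of_injective]
    · exact hcard S hS
    · intro s t h
      simp only [Prod.mk.injEq, true_and] at h
      simpa using e.symm.injective h
  have hBinj : Set.InjOn B ((Finset.univ : Finset (Fin M)) ×ˢ C' : Finset _) := by
    rintro ⟨i, S⟩ hp ⟨i', S'⟩ hq h
    have hS := hcard S (Finset.mem_product.1 hp).2
    have hmem : ∀ s, s ∈ S ↔ (i, e.symm (0, s)) ∈ B (i, S) := by
      intro s
      rw [hB]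
      simp
    have hne : S.Nonempty := by
      rw [← Finset.card_pos, hS]; omega
    obtain ⟨s, hs⟩ := hne
    have h1 := (hmem s).1 hs
    rw [h, hB] at h1
    obtain ⟨rfl, -⟩ := h1
    congr 1
    ext s
    rw [hmem, h, hB]
    simp
  refine ⟨Finset.univ.image A ∪ ((Finset.univ : Finset (Fin M)) ×ˢ C').image B, ⟨?_, ?_⟩, ?_⟩
  · intro S hS
    rw [Finset.mem_union, Finset.mem_image, Finset.mem_image] at hS
    rcases hS with ⟨a, -, rfl⟩ | ⟨⟨i, S⟩, hp, rfl⟩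
    · exact hAcard a
    · exact hBcard i S (Finset.mem_product.1 hp).2
  · intro S hS S' hS' hne i j
    rw [Finset.mem_union, Finset.mem_image, Finset.mem_image] at hS hS'
    rcases hS with ⟨a, -, rfl⟩ | ⟨p, hp, rfl⟩ <;> rcases hS' with ⟨a', -, rfl⟩ | ⟨q, hq, rfl⟩
    · exact hAA a a' (fun h => hne (by rw [h])) i j
    · exact hAB a q.1 q.2 i j
    · exact (hAB a' p.1 p.2 i j).symm
    · exact hBB p hp q hq (fun h => hne (by rw [h])) i j
  · rw [Finset.card_union_of_disjoint, Finset.card_image_of_injective _ hAinj,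
      Finset.card_image_of_injOn hBinj, Finset.card_product, Finset.card_univ, Finset.card_univ,
      ZMod.card, Fintype.card_fin]
    · have h1 : (C'.card : ℝ) * (2 * ((M * k : ℕ) : ℝ) - 2) = (L' : ℝ) - 1 := by
        have := congrArg (Nat.cast : ℕ → ℝ) hcount
        rw [Nat.cast_mul, Nat.cast_sub (by omega), Nat.cast_sub (by omega)] at this
        simpa using this
      have h2 : (((2 * k - 1 : ℕ)) : ℝ) = 2 * (k : ℝ) - 1 := by
        rw [Nat.cast_sub (by omega)]; simp
      have hkR : (2 : ℝ) ≤ k := by exact_mod_cast hk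
      have hMR : (3 : ℝ) ≤ M := by exact_mod_cast hM
      have p1 : (M : ℝ) * k - 1 ≠ 0 := by nlinarith
      have p2 : 2 * (k : ℝ) - 1 ≠ 0 := by linarith
      have p3 : (M : ℝ) ≠ 0 := by linarith
      push_cast at h1 ⊢
      rw [h2]
      have q1 : 2 * ((M : ℝ) * k) - M = M * (2 * k - 1) := by ring
      have q2 : 2 * ((M : ℝ) * k) - 2 = 2 * (M * k - 1) := by ring
      have q3 : (L' : ℝ) = C'.card * (2 * (M * k - 1)) + 1 := by rw [← q2]; linarith
      rw [q1, q2, q3]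
      field_simp
      ring
    · rw [Finset.disjoint_left]
      intro S h1 h2
      rw [Finset.mem_image] at h1 h2
      obtain ⟨a, -, rfl⟩ := h1
      obtain ⟨⟨i, S⟩, -, h⟩ := h2
      obtain ⟨s, hs⟩ := hAmem a i1
      obtain ⟨t, ht⟩ := hAmem a i0
      rw [← h, hB] at hs ht
      exact h01 (hs.1.trans ht.1.symm)
end

section
/- Let M, L, L', w be positive integers such that w > M ≥ 3, M divides w, L = (2w/M - 1)·L', and every prime factor of L' is at least 2w - 1. Then every MC-CAC of length L and weight w in M channels has at most M(M-1)·(L + (τ(2w/M - 1) - 1)·(L - L'))/((2w-M)(w-1)) + (M(L-1) + 2(w-M))/(2w-2) codewords. -/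
open Pointwise in
lemma key0 {G : Type*} [AddCommGroup G] [DecidableEq G] (n : ℕ) : ∀ (A B : Finset G),
    B.card = n → (0 : G) ∈ A → (0 : G) ∈ B →
    ∃ H : AddSubgroup G, (H : Set G) ⊆ ((A + B : Finset G) : Set G) ∧
      A.card + B.card ≤ (A + B).card + Nat.card H := by
  induction n using Nat.strong_induction_on with
  | _ n ih =>
  intro A B hn hA hB
  by_cases h : ∃ e ∈ A, ∃ b ∈ B, b + e ∉ A
  · obtain ⟨e, he, b, hb, hbe⟩ := h
    set A' := A ∪ B.image (· + e) with hA'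
    set B' := B.filter (fun x => x + e ∈ A) with hB'
    have hlt : B'.card < n := by
      rw [← hn]
      apply Finset.card_lt_card
      rw [Finset.ssubset_iff_of_subset (Finset.filter_subset _ _)]
      exact ⟨b, hb, by simp [hB', hbe]⟩
    obtain ⟨H, h1, h2⟩ := ih _ hlt A' B' rfl (by simp [hA', hA]) (by simp [hB', hB, he])
    have hsub : A' + B' ⊆ A + B := by
      intro x hx
      obtain ⟨y, hy, z, hz, rfl⟩ := Finset.mem_add.1 hx
      simp only [hB', Finset.mem_filter] at hz
      simp only [hA', Finset.mem_union, Finset.mem_image] at hy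
      rcases hy with hy | ⟨y', hy', rfl⟩
      · exact Finset.add_mem_add hy hz.1
      · have : y' + e + z = (z + e) + y' := by abel
        rw [this]
        exact Finset.add_mem_add hz.2 hy'
    have hcard : A'.card + B'.card = A.card + B.card := by
      have h3 := Finset.card_union_add_card_inter A (B.image (· + e))
      have h4 : (B.image (· + e)).card = B.card :=
        Finset.card_image_of_injective _ (add_left_injective e)
      have h5 : A ∩ B.image (· + e) = B'.image (· + e) := by
        ext x
        simp only [hB', Finset.mem_inter, Finset.mem_image, Finset.mem_filter]
        constructor
        · rintro ⟨hx, y, hy, rfl⟩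
          exact ⟨y, ⟨hy, hx⟩, rfl⟩
        · rintro ⟨y, ⟨hy, hx⟩, rfl⟩
          exact ⟨hx, y, hy, rfl⟩
      rw [h5, Finset.card_image_of_injective _ (add_left_injective e), h4] at h3
      exact h3
    refine ⟨H, h1.trans (by exact_mod_cast hsub), ?_⟩
    have := Finset.card_le_card hsub
    omega
  · push Not at h
    have hAB : A + B = A := by
      apply Finset.Subset.antisymm
      · intro x hx
        obtain ⟨y, hy, z, hz, rfl⟩ := Finset.mem_add.1 hx
        rw [add_comm]
        exact h y hy z hz
      · intro x hx
        simpa using Finset.add_mem_add hx hB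
    have hstab : ∀ b ∈ B, A.image (b + ·) = A := by
      intro b hb
      apply Finset.eq_of_subset_of_card_le
      · intro x hx
        obtain ⟨y, hy, rfl⟩ := Finset.mem_image.1 hx
        exact h y hy b hb
      · rw [Finset.card_image_of_injective _ (add_right_injective b)]
    have hcl : ∀ x ∈ AddSubgroup.closure (B : Set G), ∀ y, x + y ∈ A ↔ y ∈ A := by
      intro x hx
      induction hx using AddSubgroup.closure_induction with
      | mem x hx =>
        intro y
        constructor
        · intro hy
          rw [← hstab x hx] at hy
          obtain ⟨z, hz, hzz⟩ := Finset.mem_image.1 hy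
          rwa [← add_left_cancel hzz]
        · intro hy
          exact h y hy x hx
      | zero => simp
      | add a b _ _ iha ihb => intro y; rw [add_assoc, iha, ihb]
      | neg a _ iha => intro y; rw [← iha]; simp
    have hsub : (AddSubgroup.closure (B : Set G) : Set G) ⊆ (A : Set G) := by
      intro x hx
      have := (hcl x hx 0).2 hA
      simpa using this
    refine ⟨AddSubgroup.closure (B : Set G), by rwa [hAB], ?_⟩
    rw [hAB]
    have hfin : (AddSubgroup.closure (B : Set G) : Set G).Finite := A.finite_toSet.subset hsub
    have : (B : Set G).ncard ≤ (AddSubgroup.closure (B : Set G) : Set G).ncard :=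
      Set.ncard_le_ncard AddSubgroup.subset_closure hfin
    rw [Set.ncard_coe_finset] at this
    have h7 : (AddSubgroup.closure (B : Set G) : Set G).ncard
      = Nat.card (AddSubgroup.closure (B : Set G)) := rfl
    omega

open Pointwise in
lemma key1 {G : Type*} [AddCommGroup G] [DecidableEq G] (A B : Finset G) (a b : G)
    (ha : a ∈ A) (hb : b ∈ B) :
    ∃ H : AddSubgroup G, (∀ h ∈ H, a - b + h ∈ (A ×ˢ B).image fun p => p.1 - p.2) ∧
      A.card + B.card ≤ ((A ×ˢ B).image fun p => p.1 - p.2).card + Nat.card H := by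
  obtain ⟨H, h1, h2⟩ := key0 _ (A.image (fun x => x - a)) (B.image (fun x => b - x)) rfl
    (Finset.mem_image.2 ⟨a, ha, by simp⟩) (Finset.mem_image.2 ⟨b, hb, by simp⟩)
  rw [Finset.card_image_of_injective _ (sub_left_injective),
    Finset.card_image_of_injective _ (sub_right_injective)] at h2
  have h3 : ((A ×ˢ B).image fun p => p.1 - p.2) =
      ((A.image (fun x => x - a)) + (B.image (fun x => b - x))).image (a - b + ·) := by
    ext x
    simp only [Finset.mem_image, Finset.mem_add, Finset.mem_product, Prod.exists]
    constructor
    · rintro ⟨y, z, ⟨hy, hz⟩, rfl⟩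
      exact ⟨_, ⟨_, ⟨y, hy, rfl⟩, _, ⟨z, hz, rfl⟩, rfl⟩, by abel⟩
    · rintro ⟨_, ⟨_, ⟨y, hy, rfl⟩, _, ⟨z, hz, rfl⟩, rfl⟩, rfl⟩
      exact ⟨y, z, ⟨hy, hz⟩, by abel⟩
  refine ⟨H, ?_, ?_⟩
  · intro h hh
    rw [h3]
    exact Finset.mem_image.2 ⟨h, h1 hh, rfl⟩
  · rw [h3, Finset.card_image_of_injective _ (add_right_injective _)]
    exact h2

lemma subgroup_dvd {m L' w : ℕ} [NeZero (m * L')]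
    (hprime : ∀ p : ℕ, p.Prime → p ∣ L' → 2 * w - 1 ≤ p) (H : AddSubgroup (ZMod (m * L'))) :
    2 * w - 1 ≤ Nat.card H ∨ Nat.card H ∣ m := by
  by_contra hcon
  push Not at hcon
  obtain ⟨h1, h2⟩ := hcon
  apply h2
  have h3 : Nat.card H ∣ m * L' := by
    have := AddSubgroup.card_addSubgroup_dvd_card H
    rwa [Nat.card_zmod] at this
  refine Nat.Coprime.dvd_of_dvd_mul_right ?_ h3
  apply Nat.coprime_of_dvd
  intro p hp hpH hpL
  have := hprime p hp hpL
  have := Nat.le_of_dvd Nat.card_pos hpH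
  omega

lemma card_filter_tors {m L' : ℕ} [NeZero (m * L')] (hm : 0 < m) :
    (Finset.univ.filter (fun x : ZMod (m * L') => m • x = 0)).card ≤ m :=
  IsAddCyclic.card_nsmul_eq_zero_le hm

lemma diag_bound {M m L' w : ℕ} [NeZero (m * L')]
    (hprime : ∀ p : ℕ, p.Prime → p ∣ L' → 2 * w - 1 ≤ p)
    (S : Finset (Fin M × ZMod (m * L'))) (i : Fin M) (hw : (chan S i).card ≤ w) :
    2 * (chan S i).card ≤ (Darr S i i).card
      + ((Darr S i i).filter (fun x => m • x = 0)).card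
      + 2 * (if (chan S i).Nonempty then 1 else 0) := by
  by_cases hne : (chan S i).Nonempty
  swap
  · rw [Finset.not_nonempty_iff_eq_empty] at hne
    simp [hne]
  rw [if_pos hne]
  obtain ⟨a, ha⟩ := hne
  obtain ⟨H, h1, h2⟩ := key1 (chan S i) (chan S i) a a ha ha
  simp only [sub_self, zero_add] at h1
  have hD : Darr S i i = ((chan S i ×ˢ chan S i).image fun p => p.1 - p.2).erase 0 := by
    simp [Darr]
  set I := (chan S i ×ˢ chan S i).image fun p => p.1 - p.2 with hI
  have h0 : (0 : ZMod (m * L')) ∈ I := h1 0 H.zero_mem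
  have hc : (Darr S i i).card + 1 = I.card := by
    rw [hD]; exact Finset.card_erase_add_one h0
  classical
  have hHc : Nat.card H = (Finset.univ.filter (fun x => x ∈ H)).card := by
    rw [Nat.card_eq_fintype_card, Fintype.card_subtype]
  rcases subgroup_dvd hprime H with h | h
  · have : Nat.card H ≤ I.card := by
      rw [hHc]
      exact Finset.card_le_card (fun x hx => h1 x (by simpa using hx))
    omega
  · have : Nat.card H ≤ ((Darr S i i).filter (fun x => m • x = 0)).card + 1 := by
      rw [hHc]
      refine le_trans (Finset.card_le_card ?_) (Finset.card_insert_le 0 _)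
      intro x hx
      have hx : x ∈ H := by simpa using hx
      by_cases hx0 : x = 0
      · simp [hx0]
      apply Finset.mem_insert_of_mem
      rw [Finset.mem_filter, hD]
      refine ⟨Finset.mem_erase.2 ⟨hx0, h1 x hx⟩, ?_⟩
      have h8 : Nat.card H • x = 0 := by
        have := card_nsmul_eq_zero' (x := (⟨x, hx⟩ : H))
        exact congrArg Subtype.val this
      exact addOrderOf_dvd_iff_nsmul_eq_zero.1 ((addOrderOf_dvd_iff_nsmul_eq_zero.2 h8).trans h)
    omega

lemma off_bound {M m L' w : ℕ} [NeZero (m * L')] (hm : 0 < m)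
    (hprime : ∀ p : ℕ, p.Prime → p ∣ L' → 2 * w - 1 ≤ p)
    (S : Finset (Fin M × ZMod (m * L'))) (i j : Fin M) (hij : i ≠ j)
    (hwi : (chan S i).card ≤ w) (hwj : (chan S j).card ≤ w)
    (hi : (chan S i).Nonempty) (hj : (chan S j).Nonempty) :
    (m : ℝ) * ((chan S i).card + (chan S j).card - 1) ≤ (2 * m - 1) * (Darr S i j).card := by
  obtain ⟨a, ha⟩ := hi
  obtain ⟨b, hb⟩ := hj
  obtain ⟨H, h1, h2⟩ := key1 (chan S i) (chan S j) a b ha hb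
  have hD : Darr S i j = ((chan S i ×ˢ chan S j).image fun p => p.1 - p.2) := by
    simp [Darr, hij]
  rw [← hD] at h1 h2
  classical
  have hHc : Nat.card H = (Finset.univ.filter (fun x => x ∈ H)).card := by
    rw [Nat.card_eq_fintype_card, Fintype.card_subtype]
  have h3 : Nat.card H ≤ (Darr S i j).card := by
    rw [hHc, ← Finset.card_image_of_injective _ (add_right_injective (a - b))]
    apply Finset.card_le_card
    intro x hx
    obtain ⟨y, hy, rfl⟩ := Finset.mem_image.1 hx
    exact h1 y (by simpa using hy)
  have hm1 : (1 : ℝ) ≤ m := by exact_mod_cast hm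
  have hd0 : (0 : ℝ) ≤ (Darr S i j).card := by positivity
  rcases subgroup_dvd hprime H with h | h
  · have h4 : (chan S i).card + (chan S j).card ≤ (Darr S i j).card + 1 := by omega
    have h4' : ((chan S i).card : ℝ) + (chan S j).card ≤ (Darr S i j).card + 1 := by
      exact_mod_cast h4
    nlinarith
  · have h5 : (Nat.card H : ℝ) ≤ m := by exact_mod_cast Nat.le_of_dvd hm h
    have h3' : (Nat.card H : ℝ) ≤ (Darr S i j).card := by exact_mod_cast h3
    have h2' : ((chan S i).card : ℝ) + (chan S j).card ≤ (Darr S i j).card + Nat.card H := by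
      exact_mod_cast h2
    nlinarith

lemma sum_chan {M L : ℕ} (S : Finset (Fin M × ZMod L)) :
    ∑ i, (chan S i).card = S.card := by
  rw [Finset.card_eq_sum_card_fiberwise (f := Prod.fst) (t := Finset.univ) (by simp)]
  apply Finset.sum_congr rfl
  intro i _
  unfold chan
  apply Finset.card_image_of_injOn
  rintro ⟨a, b⟩ h ⟨c, d⟩ h' heq
  simp only [Finset.coe_filter, Set.mem_ofPred_eq] at h h'
  simp_all

lemma comb {M : ℕ} (c x : Fin M → ℝ) (hx : ∀ i, c i * x i = c i) (hxx : ∀ i, x i * x i = x i) :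
    ∑ i, ∑ j, (if i = j then 0 else x i * x j * (c i + c j - 1)) =
      (∑ i, x i - 1) * (2 * ∑ i, c i - ∑ i, x i) := by
  have h1 : ∀ i j, (if i = j then 0 else x i * x j * (c i + c j - 1)) =
      (c i * x j + x i * c j - x i * x j) - (if i = j then 2 * c i - x i else 0) := by
    intro i j
    split_ifs with h
    · subst h
      linear_combination -2 * hx i + hxx i
    · linear_combination x j * hx i + x i * hx j
  simp_rw [h1, Finset.sum_sub_distrib, Finset.sum_add_distrib]
  simp only [Finset.sum_ite_eq, Finset.mem_univ, if_true, Finset.sum_sub_distrib]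
  simp_rw [← Finset.mul_sum, ← Finset.sum_mul]
  ring

lemma sum_disj {α β : Type*} [DecidableEq β] (C : Finset α) (f : α → Finset β) (T : Finset β)
    (hd : ∀ S ∈ C, ∀ S' ∈ C, S ≠ S' → Disjoint (f S) (f S')) (hT : ∀ S ∈ C, f S ⊆ T) :
    ∑ S ∈ C, (f S).card ≤ T.card := by
  rw [← Finset.card_biUnion hd]
  exact Finset.card_le_card (Finset.biUnion_subset.2 hT)

theorem stmt_11 (M L L' w : ℕ) (hM : 3 ≤ M) (hMw : M < w) (hdvd : M ∣ w)
    (hL' : 0 < L') (hL : L = (2 * (w / M) - 1) * L')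
    (hprime : ∀ p : ℕ, p.Prime → p ∣ L' → 2 * w - 1 ≤ p)
    (C : Finset (Finset (Fin M × ZMod L))) (hC : IsMCCAC M L w C) :
    (C.card : ℝ) ≤
      (M : ℝ) * ((M : ℝ) - 1) *
          ((L : ℝ) + (((2 * (w / M) - 1 : ℕ).divisors.card : ℝ) - 1) * ((L : ℝ) - (L' : ℝ)))
          / ((2 * (w : ℝ) - (M : ℝ)) * ((w : ℝ) - 1))
      + ((M : ℝ) * ((L : ℝ) - 1) + 2 * ((w : ℝ) - (M : ℝ))) / (2 * (w : ℝ) - 2) := by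
  
  obtain ⟨k, rfl⟩ := hdvd
  have hM0 : 0 < M := by omega
  rw [Nat.mul_div_cancel_left k hM0] at hL ⊢
  have hk : 2 ≤ k := by
    by_contra h
    have : k ≤ 1 := by omega
    have := Nat.mul_le_mul_left M this
    omega
  obtain ⟨m, hm⟩ : ∃ m, m = 2 * k - 1 := ⟨_, rfl⟩
  rw [← hm] at hL ⊢
  have hm3 : 3 ≤ m := by omega
  have hm0 : 0 < m := by omega
  subst hL
  haveI : NeZero (m * L') := ⟨by positivity⟩
  obtain ⟨w, hw⟩ : ∃ w, w = M * k := ⟨_, rfl⟩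
  obtain ⟨hC1, hC2⟩ := hC
  rw [← hw] at hC1 hprime
  have hcw : ∀ S ∈ C, ∀ i, (chan S i).card ≤ w := by
    intro S hS i
    rw [← hC1 S hS, ← sum_chan]
    exact Finset.single_le_sum (f := fun i => (chan S i).card) (by simp) (Finset.mem_univ i)
  -- active indicators
  let x : Finset (Fin M × ZMod (m * L')) → Fin M → ℕ :=
    fun S i => if (chan S i).Nonempty then 1 else 0
  let a : Finset (Fin M × ZMod (m * L')) → ℕ := fun S => ∑ i, x S i
  have hdiag : 2 * w * C.card ≤ M * (m * L' - 1) + M * (m - 1) + 2 * ∑ S ∈ C, a S := by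
    have h1 : ∀ S ∈ C, 2 * w ≤ ∑ i, (Darr S i i).card
        + ∑ i, ((Darr S i i).filter (fun y => m • y = 0)).card + 2 * a S := by
      intro S hS
      rw [← hC1 S hS, ← sum_chan, Finset.mul_sum, ← Finset.sum_add_distrib, Finset.mul_sum,
        ← Finset.sum_add_distrib]
      exact Finset.sum_le_sum fun i _ => diag_bound hprime S i (hcw S hS i)
    have h2 := Finset.sum_le_sum h1
    rw [Finset.sum_const, Finset.sum_add_distrib, Finset.sum_add_distrib, ← Finset.mul_sum,
      Finset.sum_comm, Finset.sum_comm (s := C)] at h2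
    have h0D : ∀ (S : Finset (Fin M × ZMod (m * L'))) i, (0 : ZMod (m * L')) ∉ Darr S i i := by
      intro S i; simp [Darr]
    have h3 : ∑ i : Fin M, ∑ S ∈ C, (Darr S i i).card ≤ M * (m * L' - 1) := by
      have : ∀ i ∈ (Finset.univ : Finset (Fin M)),
          ∑ S ∈ C, (Darr S i i).card ≤ m * L' - 1 := by
        intro i _
        refine (sum_disj C (fun S => Darr S i i) (Finset.univ.erase 0)
          (fun S hS S' hS' hne => hC2 S hS S' hS' hne i i) ?_).trans ?_
        · intro S hS y hy
          refine Finset.mem_erase.2 ⟨?_, Finset.mem_univ _⟩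
          rintro rfl
          exact h0D S i hy
        · rw [Finset.card_erase_of_mem (Finset.mem_univ _), Finset.card_univ, ZMod.card]
      simpa using Finset.sum_le_sum this
    have h4 : ∑ i : Fin M, ∑ S ∈ C, ((Darr S i i).filter (fun y => m • y = 0)).card
        ≤ M * (m - 1) := by
      have : ∀ i ∈ (Finset.univ : Finset (Fin M)),
          ∑ S ∈ C, ((Darr S i i).filter (fun y => m • y = 0)).card ≤ m - 1 := by
        intro i _
        refine (sum_disj C (fun S => (Darr S i i).filter (fun y => m • y = 0))
          ((Finset.univ.filter (fun y : ZMod (m * L') => m • y = 0)).erase 0)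
          (fun S hS S' hS' hne => (hC2 S hS S' hS' hne i i).mono
            (Finset.filter_subset _ _) (Finset.filter_subset _ _)) ?_).trans ?_
        · intro S hS y hy
          rw [Finset.mem_filter] at hy
          refine Finset.mem_erase.2 ⟨?_, by simpa using hy.2⟩
          rintro rfl
          exact h0D S i hy.1
        · rw [Finset.card_erase_of_mem (by simp)]
          exact Nat.sub_le_sub_right (card_filter_tors hm0) 1
      simpa using Finset.sum_le_sum this
    rw [smul_eq_mul] at h2
    have h5 : 2 * w * C.card = C.card * (2 * w) := by ring
    omega
  have hmR : (3 : ℝ) ≤ m := by exact_mod_cast hm3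
  have hMR : (3 : ℝ) ≤ M := by exact_mod_cast hM
  have hL'R : (1 : ℝ) ≤ L' := by exact_mod_cast hL'
  have hmk : (m : ℝ) = 2 * k - 1 := by
    rw [hm, Nat.cast_sub (by omega)]; push_cast; ring
  have hwR : (w : ℝ) = M * k := by exact_mod_cast hw
  have hwM : 2 * (w : ℝ) - M = M * m := by rw [hwR, hmk]; ring
  have hoff : (m : ℝ) * ((2 * w - M) * ∑ S ∈ C, ((a S : ℝ) - 1)) ≤
      (2 * m - 1) * (M * (M - 1) * (m * L')) := by
    have h1 : ∀ S ∈ C, (m : ℝ) * ((2 * w - M) * ((a S : ℝ) - 1)) ≤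
        (2 * m - 1) * ∑ i, ∑ j, (if i = j then 0 else ((Darr S i j).card : ℝ)) := by
      intro S hS
      have hsum : ∑ i, ((chan S i).card : ℝ) = w := by
        rw [← hC1 S hS, ← sum_chan]; push_cast; rfl
      have haS : (a S : ℝ) = ∑ i, (x S i : ℝ) := by simp [a]
      have ha1 : 1 ≤ a S := by
        by_contra hcon
        have h0 : a S = 0 := by omega
        have h0' : ∀ i, x S i = 0 := by
          intro i
          exact (Finset.sum_eq_zero_iff.1 h0) i (Finset.mem_univ i)
        have : w = 0 := by
          rw [← hC1 S hS, ← sum_chan]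
          apply Finset.sum_eq_zero
          intro i _
          have := h0' i
          simp only [x] at this
          split_ifs at this with hh
          rw [Finset.not_nonempty_iff_eq_empty] at hh
          simp [hh]
        omega
      have haM : a S ≤ M := by
        have : ∀ i ∈ (Finset.univ : Finset (Fin M)), x S i ≤ 1 := by
          intro i _; simp only [x]; split_ifs <;> simp
        simpa using Finset.sum_le_sum this
      have hc := comb (fun i => ((chan S i).card : ℝ)) (fun i => (x S i : ℝ))
        (by
          intro i
          simp only [x]
          split_ifs with hh
          · simp
          · rw [Finset.not_nonempty_iff_eq_empty] at hh
            simp [hh])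
        (by intro i; simp only [x]; split_ifs <;> simp)
      rw [hsum, ← haS] at hc
      have ha1' : (1 : ℝ) ≤ a S := by exact_mod_cast ha1
      have haM' : (a S : ℝ) ≤ M := by exact_mod_cast haM
      calc (m : ℝ) * ((2 * w - M) * ((a S : ℝ) - 1))
          ≤ m * (((a S : ℝ) - 1) * (2 * w - a S)) := by
            apply mul_le_mul_of_nonneg_left _ (by positivity)
            nlinarith
        _ ≤ _ := by
            rw [← hc, Finset.mul_sum, Finset.mul_sum]
            apply Finset.sum_le_sum
            intro i _
            rw [Finset.mul_sum, Finset.mul_sum]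
            apply Finset.sum_le_sum
            intro j _
            by_cases hij : i = j
            · simp [hij]
            rw [if_neg hij, if_neg hij]
            have hpos : (0 : ℝ) ≤ (2 * m - 1) * (Darr S i j).card :=
              mul_nonneg (by linarith) (by positivity)
            by_cases hi : (chan S i).Nonempty
            · by_cases hj : (chan S j).Nonempty
              · simpa [x, hi, hj] using
                  off_bound hm0 hprime S i j hij (hcw S hS i) (hcw S hS j) hi hj
              · simpa [x, hj] using hpos
            · simpa [x, hi] using hpos
    have h2 := Finset.sum_le_sum h1
    rw [← Finset.mul_sum, ← Finset.mul_sum, ← Finset.mul_sum] at h2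
    refine h2.trans (mul_le_mul_of_nonneg_left ?_ (by linarith))
    rw [Finset.sum_comm]
    have h3 : ∀ i ∈ (Finset.univ : Finset (Fin M)), ∑ S ∈ C, ∑ j,
        (if i = j then 0 else ((Darr S i j).card : ℝ)) ≤ (M - 1) * (m * L') := by
      intro i _
      rw [Finset.sum_comm]
      have h4 : ∀ j ∈ (Finset.univ : Finset (Fin M)), ∑ S ∈ C,
          (if i = j then 0 else ((Darr S i j).card : ℝ)) ≤
          (m * L') - (if i = j then (m * L' : ℝ) else 0) := by
        intro j _
        by_cases hij : i = j
        · simp [hij]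
        simp only [hij, if_false, sub_zero]
        have := sum_disj C (fun S => Darr S i j) Finset.univ
          (fun S hS S' hS' hne => hC2 S hS S' hS' hne i j) (fun S _ => Finset.subset_univ _)
        rw [Finset.card_univ, ZMod.card] at this
        exact_mod_cast this
      refine (Finset.sum_le_sum h4).trans (le_of_eq ?_)
      simp [Finset.sum_sub_distrib]
      ring
    refine (Finset.sum_le_sum h3).trans (le_of_eq ?_)
    simp
    ring
  have htau : (2 : ℝ) ≤ (m.divisors.card : ℝ) := by
    have h : ({1, m} : Finset ℕ) ⊆ m.divisors := by
      intro y hy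
      simp only [Finset.mem_insert, Finset.mem_singleton] at hy
      rcases hy with rfl | rfl <;> simp [hm0.ne']
    have h2 := Finset.card_le_card h
    rw [Finset.card_pair (by omega)] at h2
    exact_mod_cast h2
  have hdiagR : 2 * (w : ℝ) * C.card ≤
      M * (m * L' - 1) + M * (m - 1) + 2 * ∑ S ∈ C, (a S : ℝ) := by
    have h1 : 1 ≤ m * L' := Nat.mul_pos hm0 hL'
    have := (Nat.cast_le (α := ℝ)).2 hdiag
    push_cast [Nat.cast_sub h1, Nat.cast_sub hm0] at this
    exact this
  have hsa : ∑ S ∈ C, ((a S : ℝ) - 1) = ∑ S ∈ C, (a S : ℝ) - C.card := by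
    simp [Finset.sum_sub_distrib]
  rw [hsa] at hoff
  obtain ⟨T, hT⟩ : ∃ T, T = (∑ S ∈ C, (a S : ℝ)) - C.card := ⟨_, rfl⟩
  rw [← hT] at hoff
  have hsum : (∑ S ∈ C, (a S : ℝ)) = T + C.card := by rw [hT]; ring
  rw [hsum] at hdiagR
  rw [← hw]
  push_cast
  have hw1 : (0 : ℝ) < w - 1 := by
    have : M < w := by omega
    have : (M : ℝ) < w := by exact_mod_cast this
    linarith
  have hMm : (0 : ℝ) < 2 * w - M := by rw [hwM]; positivity
  have hLL : (0 : ℝ) ≤ m * L' - L' := by nlinarith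
  obtain ⟨N, hN⟩ : ∃ N : ℝ, N = (M : ℝ) * ((M : ℝ) - 1) *
    (m * L' + ((m.divisors.card : ℝ) - 1) * (m * L' - L')) := ⟨_, rfl⟩
  have hTN : (2 * w - M) * T ≤ N := by
    have h1 : (2 * w - M) * T ≤ M * (M - 1) * (m * L' + (m * L' - L')) := by
      refine le_of_mul_le_mul_left (hoff.trans (le_of_eq ?_)) (by linarith : (0 : ℝ) < m)
      ring
    refine h1.trans ?_
    rw [hN]
    apply mul_le_mul_of_nonneg_left _ (mul_nonneg (by linarith) (by linarith))
    nlinarith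
  rw [← hN]
  have hT2 : T ≤ N / (2 * w - M) := by
    rw [le_div_iff₀ hMm]; linarith
  have e1 : N / ((2 * (w : ℝ) - M) * (w - 1)) = 2 * (N / (2 * w - M)) / (2 * w - 2) := by
    have : (2 * (w : ℝ) - 2) = 2 * (w - 1) := by ring
    rw [this]
    field_simp
  rw [e1, ← add_div, le_div_iff₀ (by linarith)]
  have e2 : (M : ℝ) * (m - 1) = 2 * (w - M) := by linear_combination -hwM
  linarith
end

section
/- Let w ≥ 2 be an integer and let p_1 < p_2 < ... < p_n be primes such that 2w - 2 divides p_i - 1 for each i. Suppose that for each i = 1, ..., n there exists an equi-difference CAC of length p_i and weight w with (p_i - 1)/(2w - 2) codewords, and that the Legendre symbol conditions hold: (-1/p_i) = -1, and (j/p_i)·((j-w+1)/p_i) = -1 for every j = 1, 2, ..., w-2. Let r_1, ..., r_n be positive integers, P = p_1^{r_1}···p_n^{r_n}, and L = (w-1)P. Then the maximum number A of codewords of an AM-OPPTS MC-CAC of length L and weight w in 2 channels satisfies P + (P-1)/(w-1) - 1 ≤ A ≤ P + (P-1)/(w-1). -/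
/-- An MC-CAC with the at most one-packet per time slot (AM-OPPTS) property. -/
def IsAMOPPTSMCCAC (M L w : ℕ) (C : Finset (Finset (Fin M × ZMod L))) : Prop :=
  IsMCCAC M L w C ∧
  ∀ S ∈ C, ∀ t : ZMod L, ∀ i j : Fin M, (i, t) ∈ S → (j, t) ∈ S → i = j


open Pointwise in
theorem pigeon_aux {G : Type*} [AddCommGroup G] [Fintype G] [DecidableEq G] (m : ℕ)
    (hG : ∀ H : AddSubgroup G, Nat.card H ∣ m ∨ m ≤ Nat.card H) :
    ∀ (n : ℕ) (A B : Finset G), B.card = n → A.Nonempty → B.Nonempty →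
      m + 1 ≤ A.card + B.card → m ≤ (A + B).card := by
  intro n
  induction n using Nat.strong_induction_on with
  | _ n ih =>
  intro A B hBn hA hB hAB
  by_cases hst : ∀ a ∈ A, ∀ b ∈ B, ∀ b' ∈ B, a + (b' - b) ∈ A
  · obtain ⟨b0, hb0⟩ := hB
    set H := AddAction.stabilizer G A with hH
    have hmem : ∀ b ∈ B, b - b0 ∈ H := by
      intro b hb
      rw [hH, AddAction.mem_stabilizer_finset']
      intro a ha
      have := hst a ha b0 hb0 b hb
      rw [vadd_eq_add, add_comm]; exact this
    have hBle : B.card ≤ Nat.card H := by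
      rw [← Nat.card_eq_finsetCard]
      refine Nat.card_le_card_of_injective (fun b : B => (⟨b.1 - b0, hmem b.1 b.2⟩ : H)) ?_
      intro x y hxy
      simp only [Subtype.mk.injEq, sub_left_inj] at hxy
      exact Subtype.ext hxy
    have hdvd : Nat.card H ∣ A.card := by
      have h1 := AddSubgroup.card_add_eq_card_addSubgroup_add_card_quotient H (A : Set G)
      have h2 : ((A : Set G) + (H : Set G)) = A := by
        ext x
        constructor
        · rintro ⟨a, ha, h, hh, rfl⟩
          have hh' : h ∈ AddAction.stabilizer G A := hh
          rw [AddAction.mem_stabilizer_finset'] at hh'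
          have := hh' ha
          rw [vadd_eq_add, add_comm] at this
          exact this
        · intro hx
          exact ⟨x, hx, 0, H.zero_mem, add_zero x⟩
      rw [h2] at h1
      have h3 : Nat.card (A : Set G) = A.card := by simp
      rw [h3] at h1
      exact ⟨_, h1⟩
    have hAle : A.card ≤ (A + B).card := by
      exact Finset.card_le_card_add_right ⟨b0, hb0⟩
    have hApos := hA.card_pos
    have hHpos : 0 < Nat.card H := Nat.card_pos
    rcases hG H with h | h
    · obtain ⟨c, hc⟩ := h
      obtain ⟨d, hd⟩ := hdvd
      have : c < d + 1 := by
        by_contra hcon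
        have : d + 1 ≤ c := by omega
        have := Nat.mul_le_mul_left (Nat.card H) this
        rw [mul_add] at this
        omega
      have := Nat.mul_le_mul_left (Nat.card H) (Nat.lt_succ_iff.1 this)
      omega
    · have := Nat.le_of_dvd hApos hdvd
      omega
  · push Not at hst
    obtain ⟨a, ha, b, hb, b', hb', hn⟩ := hst
    set e := a - b with he
    have hs := Finset.addDysonETransform.subset e (A, B)
    have hc := Finset.addDysonETransform.card e (A, B)
    have hsub : (Finset.addDysonETransform e (A, B)).2 ⊂ B := by
      refine ⟨Finset.inter_subset_left, fun h => ?_⟩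
      have h1 := h hb'
      rw [Finset.addDysonETransform_snd, Finset.mem_inter, Finset.mem_neg_vadd_finset_iff] at h1
      apply hn
      have h2 := h1.2
      rw [vadd_eq_add, he] at h2
      convert h2 using 1
      abel
    have hcl := Finset.card_lt_card hsub
    refine le_trans (ih _ (hBn ▸ hcl) _ _ rfl ?_ ?_ ?_) (Finset.card_le_card hs)
    · exact ⟨a, by rw [Finset.addDysonETransform_fst]; exact Finset.mem_union_left _ ha⟩
    · refine ⟨b, ?_⟩
      rw [Finset.addDysonETransform_snd, Finset.mem_inter, Finset.mem_neg_vadd_finset_iff]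
      refine ⟨hb, ?_⟩
      rw [vadd_eq_add, he]; simpa using ha
    · simp only at hc
      omega

open Pointwise in
theorem diff_fib {G Q : Type*} [AddCommGroup G] [AddCommGroup Q] [DecidableEq G] [DecidableEq Q]
    (φ : G →+ Q) (N : ℕ) (hN : (N : ℕ∞) ≤ AddMonoid.minOrder Q) (A : Finset G) (hA : A.Nonempty)
    (hAN : 2 * A.card - 1 ≤ N) :
    2 * A.card ≤ (A - A).card + ((A - A).filter (fun x => φ x = 0)).card := by
  classical
  set fib : Finset G → Q → Finset G := fun S c => S.filter (fun x => φ x = c) with hfib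
  set A' := A.image φ with hA'
  have hA'ne : A'.Nonempty := hA.image _
  obtain ⟨c0, hc0, hmax⟩ := Finset.exists_max_image A' (fun c => (fib A c).card) hA'ne
  set α := (fib A c0).card with hα
  have hfibpos : ∀ c ∈ A', 0 < (fib A c).card := by
    intro c hc
    obtain ⟨a, ha, rfl⟩ := Finset.mem_image.1 hc
    exact Finset.card_pos.2 ⟨a, Finset.mem_filter.2 ⟨ha, rfl⟩⟩
  have hf0 : α ≤ ((A - A).filter (fun x => φ x = 0)).card := by
    obtain ⟨a0, ha0⟩ := Finset.card_pos.1 (hfibpos c0 hc0)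
    refine Finset.card_le_card_of_injOn (fun a => a - a0) ?_ ?_
    · intro a ha
      have h1 := Finset.mem_filter.1 (Finset.mem_coe.1 ha)
      have h2 := Finset.mem_filter.1 ha0
      refine Finset.mem_coe.2 (Finset.mem_filter.2 ⟨Finset.sub_mem_sub h1.1 h2.1, ?_⟩)
      rw [map_sub, h1.2, h2.2, sub_self]
    · intro a _ b _ hab
      exact sub_left_injective hab
  set T := (A - A).image φ with hT
  have hcount : ∀ t ∈ Finset.range α,
      (A'.filter (fun c => t < (fib A c).card)).card + (A'.card - 1) ≤
        (T.filter (fun c => t < (fib (A - A) c).card)).card := by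
    intro t ht
    rw [Finset.mem_range] at ht
    set At := A'.filter (fun c => t < (fib A c).card) with hAt
    have hAtne : At.Nonempty := ⟨c0, Finset.mem_filter.2 ⟨hc0, ht⟩⟩
    have hsub : At + (-A') ⊆ T.filter (fun c => t < (fib (A - A) c).card) := by
      intro x hx
      obtain ⟨c, hc, d, hd, rfl⟩ := Finset.mem_add.1 hx
      rw [Finset.mem_neg] at hd
      obtain ⟨d, hd, rfl⟩ := hd
      obtain ⟨b, hb, rfl⟩ := Finset.mem_image.1 hd
      have hc' := Finset.mem_filter.1 hc
      have hle : (fib A c).card ≤ (fib (A - A) (c + -φ b)).card := by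
        refine Finset.card_le_card_of_injOn (fun a => a - b) ?_ ?_
        · intro a ha
          have h1 := Finset.mem_filter.1 (Finset.mem_coe.1 ha)
          refine Finset.mem_coe.2 (Finset.mem_filter.2 ⟨Finset.sub_mem_sub h1.1 hb, ?_⟩)
          rw [map_sub, h1.2, sub_eq_add_neg]
        · intro a _ b _ hab
          exact sub_left_injective hab
      have hlt : t < (fib (A - A) (c + -φ b)).card := lt_of_lt_of_le hc'.2 hle
      refine Finset.mem_filter.2 ⟨?_, hlt⟩
      obtain ⟨y, hy⟩ := Finset.card_pos.1 (lt_of_le_of_lt (Nat.zero_le _) hlt)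
      have := Finset.mem_filter.1 hy
      rw [hT, ← this.2]
      exact Finset.mem_image_of_mem _ this.1
    have hcd := cauchy_davenport_minOrder_add hAtne hA'ne.neg
    rw [Finset.card_neg] at hcd
    have h1 : At.card ≤ A'.card := Finset.card_filter_le _ _
    have h2 : A'.card ≤ A.card := Finset.card_image_le
    have h3 := Finset.card_le_card hsub
    have h4 := hA'ne.card_pos
    have h5 : At.card + A'.card - 1 ≤ (At + -A').card := by
      have : ((At.card + A'.card - 1 : ℕ) : ℕ∞) ≤ ((At + -A').card : ℕ∞) := by
        refine le_trans (le_min (le_trans ?_ hN) le_rfl) hcd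
        exact_mod_cast (by omega : At.card + A'.card - 1 ≤ N)
      exact_mod_cast this
    omega
  have hAsum : A.card = ∑ c ∈ A', (fib A c).card :=
    Finset.card_eq_sum_card_image φ A
  have hDsum : (A - A).card = ∑ c ∈ T, (fib (A - A) c).card :=
    Finset.card_eq_sum_card_image φ (A - A)
  have hlev : ∀ (U : Finset Q) (f : Q → ℕ),
      ∑ t ∈ Finset.range α, (U.filter (fun c => t < f c)).card = ∑ c ∈ U, min α (f c) := by
    intro U f
    simp_rw [Finset.card_filter]
    rw [Finset.sum_comm]
    refine Finset.sum_congr rfl fun c _ => ?_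
    rw [← Finset.card_filter]
    have : (Finset.range α).filter (fun t => t < f c) = Finset.range (min α (f c)) := by
      ext t; simp
    rw [this, Finset.card_range]
  have h1 := Finset.sum_le_sum hcount
  rw [Finset.sum_add_distrib, hlev, hlev, Finset.sum_const, Finset.card_range, smul_eq_mul] at h1
  have h2 : ∑ c ∈ A', min α (fib A c).card = A.card := by
    rw [hAsum]
    exact Finset.sum_congr rfl fun c hc => min_eq_right (hmax c hc)
  have h3 : ∑ c ∈ T, min α (fib (A - A) c).card ≤ (A - A).card := by
    rw [hDsum]
    exact Finset.sum_le_sum fun c _ => min_le_right _ _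
  have h4 : A.card ≤ A'.card * α := by
    rw [hAsum]
    exact Finset.sum_le_card_nsmul _ _ _ hmax
  have h5 := hA'ne.card_pos
  obtain ⟨k, hk⟩ : ∃ k, A'.card = k + 1 := ⟨A'.card - 1, by omega⟩
  rw [hk] at h1 h4
  rw [h2] at h1
  simp only [Nat.add_sub_cancel] at h1
  nlinarith

theorem card_chan_sum {L : ℕ} (S : Finset (Fin 2 × ZMod L)) :
    (chan S 0).card + (chan S 1).card = S.card := by
  have h : ∀ i : Fin 2, (chan S i).card = (S.filter fun p => p.1 = i).card := by
    intro i
    refine Finset.card_image_of_injOn ?_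
    intro x hx y hy hxy
    have h1 := (Finset.mem_filter.1 (Finset.mem_coe.1 hx)).2
    have h2 := (Finset.mem_filter.1 (Finset.mem_coe.1 hy)).2
    exact Prod.ext (h1.trans h2.symm) hxy
  rw [h, h, ← Finset.card_filter_add_card_filter_not (s := S) (fun p => p.1 = 0)]
  congr 2
  refine Finset.filter_congr fun x _ => ?_
  have : ∀ a : Fin 2, a = 1 ↔ ¬ a = 0 := by decide
  exact this _

theorem mem_chan {M L : ℕ} (S : Finset (Fin M × ZMod L)) (i : Fin M) (t : ZMod L) :
    t ∈ chan S i ↔ (i, t) ∈ S := by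
  simp only [chan, Finset.mem_image, Finset.mem_filter]
  constructor
  · rintro ⟨⟨a, b⟩, ⟨h1, h2⟩, h3⟩
    simp only at h2 h3
    subst h2; subst h3; exact h1
  · intro h
    exact ⟨(i, t), ⟨h, rfl⟩, rfl⟩

theorem subgroup_card_aux {m P : ℕ} (hm : 1 ≤ m) (hP : 0 < P)
    (hpr : ∀ q : ℕ, q.Prime → q ∣ P → 2 * m + 1 ≤ q) (H : AddSubgroup (ZMod (m * P))) :
    Nat.card H ∣ m ∨ m ≤ Nat.card H := by
  have hd : Nat.card H ∣ m * P := by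
    have := AddSubgroup.card_addSubgroup_dvd_card H
    rwa [Nat.card_zmod] at this
  have : NeZero (m * P) := ⟨by positivity⟩
  by_cases hc : Nat.Coprime (Nat.card H) P
  · exact Or.inl (hc.dvd_of_dvd_mul_right hd)
  · right
    obtain ⟨q, hq, h1, h2⟩ := Nat.Prime.not_coprime_iff_dvd.1 hc
    have := hpr q hq h2
    have := Nat.le_of_dvd Nat.card_pos h1
    omega

theorem minOrder_aux {m P : ℕ} (hP : 0 < P)
    (hpr : ∀ q : ℕ, q.Prime → q ∣ P → 2 * m + 1 ≤ q) :
    ((2 * m + 1 : ℕ) : ℕ∞) ≤ AddMonoid.minOrder (ZMod P) := by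
  by_cases h1 : P = 1
  · subst h1
    rw [AddMonoid.le_minOrder]
    intro a ha
    exact absurd (Subsingleton.elim a 0) ha
  · rw [ZMod.minOrder hP.ne' h1]
    exact_mod_cast hpr _ (Nat.minFac_prime h1) (Nat.minFac_dvd P)

open Pointwise in
theorem upper_aux (w m P : ℕ) (hw : w = m + 1) (hm : 1 ≤ m) (hP : 0 < P) (hPd : m ∣ P - 1)
    (hpr : ∀ q : ℕ, q.Prime → q ∣ P → 2 * m + 1 ≤ q)
    (C : Finset (Finset (Fin 2 × ZMod (m * P))))
    (hC : IsAMOPPTSMCCAC 2 (m * P) w C) : C.card ≤ P + (P - 1) / m := by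
  classical
  have hLpos : 0 < m * P := by positivity
  have : NeZero (m * P) := ⟨hLpos.ne'⟩
  have : NeZero P := ⟨hP.ne'⟩
  obtain ⟨⟨hcard, hdisj⟩, hopp⟩ := hC
  have hsum : ∀ S ∈ C, (chan S 0).card + (chan S 1).card = m + 1 := by
    intro S hS; rw [card_chan_sum, hcard S hS, hw]
  have hDne : ∀ S : Finset (Fin 2 × ZMod (m * P)), Darr S 0 1 = chan S 0 - chan S 1 := by
    intro S
    rw [Darr, if_neg (by decide)]
    rfl
  have hDeq : ∀ (S : Finset (Fin 2 × ZMod (m * P))) (i : Fin 2),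
      Darr S i i = (chan S i - chan S i).erase 0 := by
    intro S i
    rw [Darr, if_pos rfl]
    rfl
  have hzero : ∀ S ∈ C, ∀ i j, (0 : ZMod (m * P)) ∉ Darr S i j := by
    intro S hS i j h
    by_cases hij : i = j
    · subst hij
      rw [hDeq] at h
      simp at h
    · rw [Darr, if_neg hij] at h
      obtain ⟨⟨a, b⟩, h1, h2⟩ := Finset.mem_image.1 h
      rw [Finset.mem_product, mem_chan, mem_chan] at h1
      simp only at h1 h2
      rw [sub_eq_zero] at h2
      subst h2
      exact hij (hopp S hS _ _ _ h1.1 h1.2)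
  have hbound : ∀ (i j : Fin 2) (K : Finset (ZMod (m * P))), 0 ∈ K →
      ∑ S ∈ C, (Darr S i j ∩ K).card ≤ K.card - 1 := by
    intro i j K hK
    rw [← Finset.card_biUnion, ← Finset.card_erase_of_mem hK]
    · refine Finset.card_le_card ?_
      intro x hx
      obtain ⟨S, hS, hx⟩ := Finset.mem_biUnion.1 hx
      rw [Finset.mem_inter] at hx
      refine Finset.mem_erase.2 ⟨?_, hx.2⟩
      rintro rfl
      exact hzero S hS i j hx.1
    · intro S hS S' hS' hne
      exact (hdisj S hS S' hS' hne i j).mono Finset.inter_subset_left Finset.inter_subset_left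
  -- mixed codewords
  set Mx := C.filter (fun S => (chan S 0).Nonempty ∧ (chan S 1).Nonempty) with hMx
  have hx : Mx.card * m ≤ m * P - 1 := by
    have h1 := hbound 0 1 Finset.univ (Finset.mem_univ _)
    rw [Finset.card_univ, ZMod.card] at h1
    refine le_trans ?_ h1
    refine le_trans ?_ (Finset.sum_le_sum_of_subset (Finset.filter_subset _ C : Mx ⊆ C))
    rw [← smul_eq_mul]
    refine Finset.card_nsmul_le_sum _ _ _ ?_
    intro S hS
    obtain ⟨hS, hA, hB⟩ := Finset.mem_filter.1 hS
    rw [Finset.inter_univ, hDne, sub_eq_add_neg]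
    refine pigeon_aux m (subgroup_card_aux hm hP hpr) _ _ _ rfl hA hB.neg ?_
    rw [Finset.card_neg, hsum S hS]
  have hx' : Mx.card ≤ P - 1 := by
    have : Mx.card < P := by
      by_contra hcon
      have := Nat.mul_le_mul_right m (not_lt.1 hcon)
      rw [mul_comm P m] at this
      omega
    omega
  set φ : ZMod (m * P) →+ ZMod P := (ZMod.castHom (Dvd.intro_left m rfl) (ZMod P)).toAddMonoidHom
    with hφ
  set K : Finset (ZMod (m * P)) := Finset.univ.filter (fun x => φ x = 0) with hK
  have hK0 : 0 ∈ K := by simp [hK]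
  have hKcard : K.card = m := by
    have hsurj : Function.Surjective φ := ZMod.ringHom_surjective (ZMod.castHom (Dvd.intro_left m rfl) (ZMod P))
    have h1 := AddSubgroup.card_mul_index φ.ker
    rw [AddSubgroup.index_ker, AddMonoidHom.range_eq_top.2 hsurj] at h1
    have h2 : Nat.card φ.ker = K.card := by
      rw [← Nat.card_eq_finsetCard]
      refine Nat.card_congr (Equiv.subtypeEquivRight fun x => ?_)
      simp [hK, AddMonoidHom.mem_ker]
    have h3 : Nat.card (⊤ : AddSubgroup (ZMod P)) = P := by
      rw [AddSubgroup.card_top, Nat.card_zmod]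
    rw [h2, h3, Nat.card_zmod] at h1
    exact Nat.eq_of_mul_eq_mul_right hP h1
  have hdiff : ∀ S ∈ C, ∀ i : Fin 2, (chan S i).Nonempty →
      2 * (chan S i).card ≤ (Darr S i i).card + (Darr S i i ∩ K).card + 2 := by
    intro S hS i hne
    have hle : (chan S i).card ≤ m + 1 := by
      have := hsum S hS
      fin_cases i <;> simp only [Fin.zero_eta, Fin.mk_one] <;> omega
    have h0 : (0 : ZMod (m * P)) ∈ chan S i - chan S i := by
      obtain ⟨a, ha⟩ := hne
      exact Finset.mem_sub.2 ⟨a, ha, a, ha, sub_self a⟩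
    have h1 := diff_fib φ (2 * m + 1) (minOrder_aux hP hpr) (chan S i) hne (by omega)
    have h2 : (Darr S i i).card + 1 = (chan S i - chan S i).card := by
      rw [hDeq]; exact Finset.card_erase_add_one h0
    have h3 : (Darr S i i ∩ K).card + 1 =
        ((chan S i - chan S i).filter (fun x => φ x = 0)).card := by
      rw [← Finset.card_erase_add_one (s := (chan S i - chan S i).filter (fun x => φ x = 0))
        (a := 0) (Finset.mem_filter.2 ⟨h0, map_zero φ⟩)]
      congr 2
      rw [hDeq]
      ext x
      simp only [hK, Finset.mem_inter, Finset.mem_erase, Finset.mem_filter, Finset.mem_univ,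
        true_and]
      tauto
    omega
  have hS1 : ∀ S ∈ C, 2 * m ≤ (∑ i : Fin 2, ((Darr S i i).card + (Darr S i i ∩ K).card)) +
      (if (chan S 0).Nonempty ∧ (chan S 1).Nonempty then 2 else 0) := by
    intro S hS
    rw [Fin.sum_univ_two]
    have h0 := hdiff S hS 0
    have h1 := hdiff S hS 1
    have hs := hsum S hS
    by_cases hA : (chan S 0).Nonempty
    · by_cases hB : (chan S 1).Nonempty
      · have := h0 hA
        have := h1 hB
        rw [if_pos ⟨hA, hB⟩]
        omega
      · have := h0 hA
        rw [Finset.not_nonempty_iff_eq_empty] at hB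
        have h2 : (chan S 1).card = 0 := by rw [hB]; rfl
        omega
    · rw [Finset.not_nonempty_iff_eq_empty] at hA
      have h2 : (chan S 0).card = 0 := by rw [hA]; rfl
      have := h1 (Finset.card_pos.1 (by omega))
      omega
  have htot := Finset.sum_le_sum hS1
  rw [Finset.sum_const, Finset.sum_add_distrib, ← Finset.sum_filter, Finset.sum_const, ← hMx,
    smul_eq_mul, smul_eq_mul, Finset.sum_comm, Fin.sum_univ_two, Finset.sum_add_distrib,
    Finset.sum_add_distrib] at htot
  have e : ∀ i : Fin 2, ∑ S ∈ C, (Darr S i i).card ≤ m * P - 1 := by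
    intro i
    have h1 := hbound i i Finset.univ (Finset.mem_univ _)
    rw [Finset.card_univ, ZMod.card] at h1
    simpa using h1
  have e0 := e 0
  have e1 := e 1
  have k0 := hbound 0 0 K hK0
  have k1 := hbound 1 1 K hK0
  rw [hKcard] at k0 k1
  obtain ⟨q, hq⟩ := hPd
  rw [hq, Nat.mul_div_cancel_left _ (by omega)]
  have : C.card < P + q + 1 := by
    by_contra hcon
    have h1 := Nat.mul_le_mul_right m (not_lt.1 hcon)
    have h2 : (P + q + 1) * m = m * P + m * q + m := by ring
    rw [h2] at h1
    have h3 : C.card * (2 * m) = 2 * (C.card * m) := by ring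
    rw [h3] at htot
    omega
  omega

structure GoodPair (m P : ℕ) (X Γ : ℤ → Prop) : Prop where
  cop : ∀ k : ℤ, k ≠ 0 → |k| ≤ m → IsCoprime k (P : ℤ)
  perX : ∀ x y : ℤ, (P : ℤ) ∣ x - y → X x → X y
  x1 : ∀ x : ℤ, ¬ (P : ℤ) ∣ x → X x ∨ X (-x)
  x2 : ∀ x x' : ℤ, ¬ (P : ℤ) ∣ x → X x → X x' → ¬ (P : ℤ) ∣ x + x'
  x3 : ∀ j : ℤ, 1 ≤ j → j < m → ∀ x x' : ℤ, ¬ (P : ℤ) ∣ x → X x → X x' →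
    ¬ (P : ℤ) ∣ j * x - (j - m) * x'
  perG : ∀ x y : ℤ, (P : ℤ) ∣ x - y → Γ x → Γ y
  g1 : ∀ k k' : ℤ, k ≠ 0 → k' ≠ 0 → |k| ≤ m → |k'| ≤ m → ∀ x x' : ℤ, ¬ (P : ℤ) ∣ x →
    Γ x → Γ x' → (P : ℤ) ∣ k * x - k' * x' → k = k' ∧ (P : ℤ) ∣ x - x'
  g2 : ∀ x : ℤ, ¬ (P : ℤ) ∣ x → ∃ k : ℤ, k ≠ 0 ∧ |k| ≤ m ∧ ∃ x', Γ x' ∧ (P : ℤ) ∣ x - k * x'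

def GoodE (m P : ℕ) : Prop := 0 < P ∧ ∃ X Γ, GoodPair m P X Γ

theorem goodE_one (m : ℕ) : GoodE m 1 := by
  refine ⟨one_pos, fun _ => False, fun _ => False, ?_⟩
  constructor <;> simp [isCoprime_one_right]

theorem lin_cop_aux {P k k' x x' : ℤ} (hk : IsCoprime k' P) (h : P ∣ k * x - k' * x')
    (hx : P ∣ x) : P ∣ x' := by
  have h1 : P ∣ k' * x' := by
    have := dvd_sub (Dvd.dvd.mul_left hx k) h
    simpa using this
  exact hk.symm.dvd_of_dvd_mul_left h1

theorem goodE_mul (m P Q : ℕ) (hP : GoodE m P) (hQ : GoodE m Q) : GoodE m (P * Q) := by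
  classical
  obtain ⟨hP0, X, Γ, h⟩ := hP
  obtain ⟨hQ0, Y, Δ, g⟩ := hQ
  have hPz : (P : ℤ) ≠ 0 := by exact_mod_cast hP0.ne'
  have hcop : ∀ k : ℤ, k ≠ 0 → |k| ≤ m → IsCoprime k ((P * Q : ℕ) : ℤ) := by
    intro k h1 h2
    push_cast
    exact (h.cop k h1 h2).mul_right (g.cop k h1 h2)
  have hto : ∀ x : ℤ, ((P * Q : ℕ) : ℤ) ∣ x → (P : ℤ) ∣ x := by
    intro x hx
    push_cast at hx
    exact dvd_of_mul_right_dvd hx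
  have hmulP : ∀ x : ℤ, ((P * Q : ℕ) : ℤ) ∣ P * x ↔ (Q : ℤ) ∣ x := by
    intro x
    push_cast
    exact mul_dvd_mul_iff_left hPz
  have hper : ∀ (U V : ℤ → Prop), (∀ x y : ℤ, (P : ℤ) ∣ x - y → U x → U y) →
      (∀ x y : ℤ, (Q : ℤ) ∣ x - y → V x → V y) → ∀ x y : ℤ, ((P * Q : ℕ) : ℤ) ∣ x - y →
      (if (P : ℤ) ∣ x then V (x / P) else U x) → (if (P : ℤ) ∣ y then V (y / P) else U y) := by
    intro U V hU hV x y hxy hx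
    have h1 := hto _ hxy
    by_cases hy : (P : ℤ) ∣ y
    · have hx' : (P : ℤ) ∣ x := by simpa using dvd_add h1 hy
      rw [if_pos hx'] at hx
      rw [if_pos hy]
      obtain ⟨a, rfl⟩ := hx'
      obtain ⟨b, rfl⟩ := hy
      rw [Int.mul_ediv_cancel_left _ hPz] at hx ⊢
      rw [← mul_sub, hmulP] at hxy
      exact hV _ _ hxy hx
    · have hx' : ¬ (P : ℤ) ∣ x := fun hh => hy (by simpa using dvd_sub hh h1)
      rw [if_neg hx'] at hx
      rw [if_neg hy]
      exact hU _ _ h1 hx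
  have hpos : ∀ (U V : ℤ → Prop) (a : ℤ),
      (if (P : ℤ) ∣ P * a then V (P * a / P) else U (P * a)) ↔ V a := by
    intro U V a
    rw [if_pos (dvd_mul_right _ _), Int.mul_ediv_cancel_left _ hPz]
  refine ⟨Nat.mul_pos hP0 hQ0, fun x => if (P : ℤ) ∣ x then Y (x / P) else X x,
    fun x => if (P : ℤ) ∣ x then Δ (x / P) else Γ x, hcop, hper X Y h.perX g.perX, ?_, ?_, ?_,
    hper Γ Δ h.perG g.perG, ?_, ?_⟩
  · intro x hx
    by_cases hd : (P : ℤ) ∣ x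
    · obtain ⟨a, rfl⟩ := hd
      rw [hmulP] at hx
      rw [← mul_neg]
      simp only [hpos]
      exact g.x1 a hx
    · have hd' : ¬ (P : ℤ) ∣ -x := by rwa [dvd_neg]
      simp only [if_neg hd, if_neg hd']
      exact h.x1 x hd
  · intro x x' hx hX hX' hdv
    by_cases hd : (P : ℤ) ∣ x
    · have hd' : (P : ℤ) ∣ x' := (dvd_add_right hd).1 (hto _ hdv)
      obtain ⟨a, rfl⟩ := hd
      obtain ⟨b, rfl⟩ := hd'
      simp only [hpos] at hX hX'
      rw [← mul_add, hmulP] at hdv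
      rw [hmulP] at hx
      exact g.x2 a b hx hX hX' hdv
    · have hd' : ¬ (P : ℤ) ∣ x' := fun hh => hd ((dvd_add_left hh).1 (hto _ hdv))
      simp only [if_neg hd, if_neg hd'] at hX hX'
      exact h.x2 x x' hd hX hX' (hto _ hdv)
  · intro j hj1 hj2 x x' hx hX hX' hdv
    have c1 : IsCoprime j (P : ℤ) := h.cop j (by omega) (by rw [abs_le]; omega)
    have c2 : IsCoprime (j - m) (P : ℤ) := h.cop _ (by omega) (by rw [abs_le]; omega)
    by_cases hd : (P : ℤ) ∣ x
    · have hd' : (P : ℤ) ∣ x' := lin_cop_aux c2 (hto _ hdv) hd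
      obtain ⟨a, rfl⟩ := hd
      obtain ⟨b, rfl⟩ := hd'
      simp only [hpos] at hX hX'
      rw [show j * (P * a) - (j - m) * (P * b) = P * (j * a - (j - m) * b) by ring, hmulP] at hdv
      rw [hmulP] at hx
      exact g.x3 j hj1 hj2 a b hx hX hX' hdv
    · have hd' : ¬ (P : ℤ) ∣ x' := fun hh => hd (lin_cop_aux c1
        (by rw [← dvd_neg]; simpa using hto _ hdv) hh)
      simp only [if_neg hd, if_neg hd'] at hX hX'
      exact h.x3 j hj1 hj2 x x' hd hX hX' (hto _ hdv)
  · intro k k' hk0 hk0' hk hk' x x' hx hX hX' hdv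
    have c1 : IsCoprime k (P : ℤ) := h.cop k hk0 hk
    have c2 : IsCoprime k' (P : ℤ) := h.cop k' hk0' hk'
    by_cases hd : (P : ℤ) ∣ x
    · have hd' : (P : ℤ) ∣ x' := lin_cop_aux c2 (hto _ hdv) hd
      obtain ⟨a, rfl⟩ := hd
      obtain ⟨b, rfl⟩ := hd'
      simp only [hpos] at hX hX'
      rw [show k * (P * a) - k' * (P * b) = P * (k * a - k' * b) by ring, hmulP] at hdv
      rw [hmulP] at hx
      rw [← mul_sub, hmulP]
      exact g.g1 k k' hk0 hk0' hk hk' a b hx hX hX' hdv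
    · have hd' : ¬ (P : ℤ) ∣ x' := fun hh => hd (lin_cop_aux c1
        (by rw [← dvd_neg]; simpa using hto _ hdv) hh)
      simp only [if_neg hd, if_neg hd'] at hX hX'
      have h1 := (h.g1 k k' hk0 hk0' hk hk' x x' hd hX hX' (hto _ hdv)).1
      refine ⟨h1, ?_⟩
      rw [← h1, ← mul_sub] at hdv
      exact (hcop k hk0 hk).symm.dvd_of_dvd_mul_left hdv
  · intro x hx
    by_cases hd : (P : ℤ) ∣ x
    · obtain ⟨a, rfl⟩ := hd
      rw [hmulP] at hx
      obtain ⟨k, hk0, hk, b, hb, hdv⟩ := g.g2 a hx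
      refine ⟨k, hk0, hk, P * b, ?_, ?_⟩
      · simpa only [hpos] using hb
      · rw [show P * a - k * (P * b) = P * (a - k * b) by ring, hmulP]
        exact hdv
    · obtain ⟨k, hk0, hk, b, hb, hdv⟩ := h.g2 x hd
      obtain ⟨u, v, huv⟩ := hcop k hk0 hk
      have hbx : ((P * Q : ℕ) : ℤ) ∣ x - k * (u * x) :=
        ⟨v * x, by linear_combination (-x) * huv⟩
      have hdb : (P : ℤ) ∣ b - u * x := by
        have h1 := dvd_sub (hto _ hbx) hdv
        rw [show x - k * (u * x) - (x - k * b) = k * (b - u * x) by ring] at h1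
        exact (h.cop k hk0 hk).symm.dvd_of_dvd_mul_left h1
      refine ⟨k, hk0, hk, u * x, ?_, hbx⟩
      have hnd : ¬ (P : ℤ) ∣ u * x := by
        intro hh
        apply hd
        have := dvd_add (hto _ hbx) (Dvd.dvd.mul_left hh k)
        simpa using this
      rw [if_neg hnd]
      exact h.perG _ _ hdb hb

theorem goodE_prime (w m p : ℕ) (hw : w = m + 1) (hm : 1 ≤ m) (hp : p.Prime)
    (hdvd : 2 * m ∣ p - 1)
    (hCAC : ∃ C : Finset (Finset (ZMod p)),
      IsCAC p w C ∧ (∀ S ∈ C, IsEquiDiff w S) ∧ C.card = (p - 1) / (2 * m))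
    (hQ1 : @legendreSym p ⟨hp⟩ (-1) = -1)
    (hQ2 : ∀ j : ℕ, 1 ≤ j → j ≤ w - 2 →
      @legendreSym p ⟨hp⟩ (j : ℤ) * @legendreSym p ⟨hp⟩ ((j : ℤ) - w + 1) = -1) :
    GoodE m p := by
  classical
  have : Fact p.Prime := ⟨hp⟩
  have hp1 := hp.one_lt
  have hpm : 2 * m + 1 ≤ p := by
    have := Nat.le_of_dvd (by omega) hdvd
    omega
  have hndvd : ∀ k : ℤ, k ≠ 0 → |k| ≤ 2 * m → ¬ (p : ℤ) ∣ k := by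
    intro k hk0 hk hd
    have := Int.le_of_dvd (abs_pos.2 hk0) ((dvd_abs _ _).2 hd)
    omega
  have hz : ∀ k : ℤ, (k : ZMod p) = 0 ↔ (p : ℤ) ∣ k := fun k => ZMod.intCast_zmod_eq_zero_iff_dvd k p
  have hpP : Prime (p : ℤ) := Nat.prime_iff_prime_int.1 hp
  obtain ⟨C, ⟨hCw, hCd⟩, hCe, hCc⟩ := hCAC
  have hCe' : ∀ S : C, ∃ g : ZMod p, S.1 = (Finset.range w).image fun j : ℕ => (j : ZMod p) * g :=
    fun S => hCe S.1 S.2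
  choose gen hgen using hCe'
  have hgen0 : ∀ S, gen S ≠ 0 := by
    intro S h0
    have h1 := hCw S.1 S.2
    rw [hgen S, h0] at h1
    have h2 : ((Finset.range w).image fun j : ℕ => (j : ZMod p) * 0) ⊆ {0} := by
      intro x hx
      simp only [mul_zero, Finset.mem_image] at hx
      obtain ⟨_, _, rfl⟩ := hx
      simp
    have := Finset.card_le_card h2
    rw [h1, Finset.card_singleton] at this
    omega
  have hkz : ∀ k : ℤ, k ≠ 0 → |k| ≤ 2 * m → (k : ZMod p) ≠ 0 := by
    intro k h1 h2 h3
    exact hndvd k h1 h2 ((hz k).1 h3)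
  have hmemd : ∀ (S : C) (k : ℤ), k ≠ 0 → |k| ≤ m → (k : ZMod p) * gen S ∈ dstar S.1 := by
    intro S k hk0 hk
    rw [dstar, Finset.mem_erase]
    refine ⟨mul_ne_zero (hkz k hk0 (by omega)) (hgen0 S), ?_⟩
    rw [abs_le] at hk
    have hj : ∀ j : ℕ, j ≤ m → (j : ZMod p) * gen S ∈ S.1 := by
      intro j hj
      have : (j : ZMod p) * gen S ∈ (Finset.range w).image fun j : ℕ => (j : ZMod p) * gen S :=
        Finset.mem_image_of_mem _ (Finset.mem_range.2 (by omega))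
      rwa [← hgen S] at this
    rw [Finset.mem_image]
    rcases le_total 0 k with h | h
    · refine ⟨((k.toNat : ZMod p) * gen S, ((0 : ℕ) : ZMod p) * gen S),
        Finset.mem_product.2 ⟨hj _ (by omega), hj _ (by omega)⟩, ?_⟩
      have : ((k.toNat : ℕ) : ZMod p) = (k : ZMod p) := by
        rw [← Int.cast_natCast, Int.toNat_of_nonneg h]
      simp [this]
    · refine ⟨(((0 : ℕ) : ZMod p) * gen S, ((-k).toNat : ZMod p) * gen S),
        Finset.mem_product.2 ⟨hj _ (by omega), hj _ (by omega)⟩, ?_⟩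
      have : (((-k).toNat : ℕ) : ZMod p) = -(k : ZMod p) := by
        rw [← Int.cast_natCast, Int.toNat_of_nonneg (by omega), Int.cast_neg]
      simp [this]
  have hinj : ∀ (S S' : C) (k k' : ℤ), k ≠ 0 → k' ≠ 0 → |k| ≤ m → |k'| ≤ m →
      (k : ZMod p) * gen S = (k' : ZMod p) * gen S' → k = k' ∧ S = S' := by
    intro S S' k k' hk0 hk0' hk hk' he
    have hSS : S = S' := by
      by_contra hne
      have hd := hCd S.1 S.2 S'.1 S'.2 (fun hh => hne (Subtype.ext hh))
      refine Finset.disjoint_left.1 hd (hmemd S k hk0 hk) ?_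
      rw [he]
      exact hmemd S' k' hk0' hk'
    subst hSS
    refine ⟨?_, rfl⟩
    by_contra hne
    have h1 := mul_right_cancel₀ (hgen0 S) he
    refine hkz (k - k') (sub_ne_zero.2 hne) ?_ ?_
    · rw [abs_le] at *; omega
    · rw [Int.cast_sub, h1, sub_self]
  have hsurj : ∀ x : ZMod p, x ≠ 0 → ∃ k : ℤ, k ≠ 0 ∧ |k| ≤ m ∧ ∃ S : C,
      (k : ZMod p) * gen S = x := by
    set Ks : Finset ℤ := (Finset.Icc (-(m : ℤ)) m).erase 0 with hKs
    have hKmem : ∀ k, k ∈ Ks ↔ k ≠ 0 ∧ |k| ≤ m := by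
      intro k
      rw [hKs, Finset.mem_erase, Finset.mem_Icc, abs_le]
    have hKc : Ks.card = 2 * m := by
      rw [hKs, Finset.card_erase_of_mem (by simp), Int.card_Icc]
      omega
    set F : ℤ × C → ZMod p := fun q => (q.1 : ZMod p) * gen q.2 with hF
    have hFinj : Set.InjOn F (Ks ×ˢ (Finset.univ : Finset C) : Finset (ℤ × C)) := by
      rintro ⟨k, S⟩ h1 ⟨k', S'⟩ h2 he
      have h1 := (hKmem k).1 (Finset.mem_product.1 (Finset.mem_coe.1 h1)).1
      have h2 := (hKmem k').1 (Finset.mem_product.1 (Finset.mem_coe.1 h2)).1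
      obtain ⟨e1, e2⟩ := hinj S S' k k' h1.1 h2.1 h1.2 h2.2 he
      exact Prod.ext e1 e2
    have himg : (Ks ×ˢ (Finset.univ : Finset C)).image F = Finset.univ.erase 0 := by
      refine Finset.eq_of_subset_of_card_le ?_ ?_
      · intro x hx
        obtain ⟨⟨k, S⟩, h1, rfl⟩ := Finset.mem_image.1 hx
        have h1 := (hKmem k).1 (Finset.mem_product.1 h1).1
        exact Finset.mem_erase.2 ⟨mul_ne_zero (hkz k h1.1 (by omega)) (hgen0 S), Finset.mem_univ _⟩
      · rw [Finset.card_image_of_injOn hFinj, Finset.card_product, hKc,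
          Finset.card_erase_of_mem (Finset.mem_univ _), Finset.card_univ, ZMod.card,
          Finset.card_univ, Fintype.card_coe, hCc, Nat.mul_div_cancel' hdvd]
    intro x hx
    have : x ∈ (Ks ×ˢ (Finset.univ : Finset C)).image F := by
      rw [himg]; exact Finset.mem_erase.2 ⟨hx, Finset.mem_univ _⟩
    obtain ⟨⟨k, S⟩, h1, h2⟩ := Finset.mem_image.1 this
    have h1 := (hKmem k).1 (Finset.mem_product.1 h1).1
    exact ⟨k, h1.1, h1.2, S, h2⟩
  have hcast : ∀ x y : ℤ, (p : ℤ) ∣ x - y ↔ (x : ZMod p) = (y : ZMod p) := by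
    intro x y
    rw [← hz, Int.cast_sub, sub_eq_zero]
  have hleg : ∀ x y : ℤ, (p : ℤ) ∣ x - y → legendreSym p x = legendreSym p y := by
    intro x y hxy
    rw [legendreSym, legendreSym, (hcast x y).1 hxy]
  refine ⟨hp.pos, fun x => legendreSym p x = 1, fun x => ∃ S, (x : ZMod p) = gen S,
    ?_, ?_, ?_, ?_, ?_, ?_, ?_, ?_⟩
  · intro k hk0 hk
    exact ((Prime.coprime_iff_not_dvd hpP).2 (hndvd k hk0 (by omega))).symm
  · intro x y hxy hx
    rw [← hleg x y hxy]; exact hx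
  · intro x hx
    have h0 : (x : ZMod p) ≠ 0 := fun h => hx ((hz x).1 h)
    rcases legendreSym.eq_one_or_neg_one p h0 with h | h
    · exact Or.inl h
    · right
      rw [neg_eq_neg_one_mul, legendreSym.mul, hQ1, h]; rfl
  · intro x x' hx hX hX' hd
    have h1 := hleg x (-x') (by simpa using hd)
    rw [neg_eq_neg_one_mul, legendreSym.mul, hQ1, hX, hX'] at h1
    norm_num at h1
  · intro j hj1 hj2 x x' hx hX hX' hd
    have h1 := hleg _ _ hd
    rw [legendreSym.mul, legendreSym.mul, hX, hX', mul_one, mul_one] at h1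
    have h2 := hQ2 j.toNat (by omega) (by omega)
    rw [Int.toNat_of_nonneg (by omega), hw] at h2
    rw [show j - ((m + 1 : ℕ) : ℤ) + 1 = j - m by push_cast; ring, ← h1] at h2
    have := mul_self_nonneg (legendreSym p j)
    omega
  · rintro x y hxy ⟨S, hS⟩
    exact ⟨S, by rw [← (hcast x y).1 hxy, hS]⟩
  · rintro k k' hk0 hk0' hk hk' x x' hx ⟨S, hS⟩ ⟨S', hS'⟩ hd
    have h1 := (hcast _ _).1 hd
    rw [Int.cast_mul, Int.cast_mul, hS, hS'] at h1
    obtain ⟨e1, e2⟩ := hinj S S' k k' hk0 hk0' hk hk' h1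
    exact ⟨e1, by rw [hcast, hS, hS', e2]⟩
  · intro x hx
    obtain ⟨k, hk0, hk, S, hS⟩ := hsurj (x : ZMod p) (fun h => hx ((hz x).1 h))
    refine ⟨k, hk0, hk, (gen S).val, ⟨S, by simp⟩, ?_⟩
    rw [hcast, ← hS]
    simp

def chF (β : Bool) (f : Fin 2) (j : ℕ) : Fin 2 := if β = true ∧ j = 0 then f + 1 else f

def genF (P : ℕ) (β : Bool) (x : ℤ) : ℤ := if β = true then x + P * (1 - x) else (1 - P) * x

def wordF (w L P : ℕ) (q : Bool × Fin 2 × ℤ) : Finset (Fin 2 × ZMod L) :=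
  (Finset.range w).image fun j : ℕ => (chF q.1 q.2.1 j, (((j : ℤ) * genF P q.1 q.2.2 : ℤ) : ZMod L))

theorem darr_wordF {w L P : ℕ} {q : Bool × Fin 2 × ℤ} {i j : Fin 2} {t : ZMod L}
    (ht : t ∈ Darr (wordF w L P q) i j) :
    ∃ a b : ℕ, a < w ∧ b < w ∧ a ≠ b ∧ chF q.1 q.2.1 a = i ∧ chF q.1 q.2.1 b = j ∧
      t = ((((a : ℤ) - b) * genF P q.1 q.2.2 : ℤ) : ZMod L) := by
  have key : t ∈ ((chan (wordF w L P q) i) ×ˢ (chan (wordF w L P q) j)).image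
      (fun p => p.1 - p.2) ∧ (i = j → t ≠ 0) := by
    rw [Darr] at ht
    split_ifs at ht with h
    · rw [Finset.mem_erase] at ht
      exact ⟨ht.2, fun _ => ht.1⟩
    · exact ⟨ht, fun hh => absurd hh h⟩
  obtain ⟨h1, h2⟩ := key
  obtain ⟨⟨u, v⟩, huv, he⟩ := Finset.mem_image.1 h1
  rw [Finset.mem_product, mem_chan, mem_chan] at huv
  simp only [wordF, Finset.mem_image, Finset.mem_range, Prod.mk.injEq] at huv
  obtain ⟨⟨a, ha, ha1, ha2⟩, ⟨b, hb, hb1, hb2⟩⟩ := huv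
  simp only at he
  have het : t = ((((a : ℤ) - b) * genF P q.1 q.2.2 : ℤ) : ZMod L) := by
    rw [← he, ← ha2, ← hb2, ← Int.cast_sub, sub_mul]
  refine ⟨a, b, ha, hb, ?_, ha1, hb1, het⟩
  rintro rfl
  refine h2 (ha1.symm.trans hb1) ?_
  rw [het]; simp

theorem mm_aux {m P : ℕ} {X Γ : ℤ → Prop} (h : GoodPair m P X Γ) {k k' x x' : ℤ}
    (hk0 : k ≠ 0) (hk0' : k' ≠ 0) (hk : |k| ≤ m) (hk' : |k'| ≤ m) (hx : ¬ (P : ℤ) ∣ x)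
    (hx' : ¬ (P : ℤ) ∣ x') (hX : X x) (hX' : X x') (hd : (P : ℤ) ∣ k * x - k' * x')
    (hm : (m : ℤ) ∣ k - k') : k = k' ∧ (P : ℤ) ∣ x - x' := by
  have c := h.cop k hk0 hk
  obtain ⟨s, hs⟩ := hm
  rw [abs_le] at hk hk'
  have hmpos : (0 : ℤ) < m := by omega
  have hs2 : s ≤ 2 := by
    by_contra hcon
    nlinarith
  have hs1 : -2 ≤ s := by
    by_contra hcon
    nlinarith
  have hcases : s = 0 ∨ s = 1 ∨ s = -1 ∨ s = 2 ∨ s = -2 := by omega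
  rcases hcases with rfl | rfl | rfl | rfl | rfl
  · have : k = k' := by omega
    subst this
    refine ⟨rfl, ?_⟩
    rw [← mul_sub] at hd
    exact c.symm.dvd_of_dvd_mul_left hd
  · exfalso
    have : k' = k - m := by omega
    subst this
    exact h.x3 k (by omega) (by omega) x x' hx hX hX' hd
  · exfalso
    have : k = k' - m := by omega
    subst this
    refine h.x3 k' (by omega) (by omega) x' x hx' hX' hX ?_
    rw [← dvd_neg]; simpa using hd
  · exfalso
    have : k' = -k := by omega
    subst this
    refine h.x2 x x' hx hX hX' ?_
    rw [show k * x - -k * x' = k * (x + x') by ring] at hd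
    exact c.symm.dvd_of_dvd_mul_left hd
  · exfalso
    have : k' = -k := by omega
    subst this
    refine h.x2 x x' hx hX hX' ?_
    rw [show k * x - -k * x' = k * (x + x') by ring] at hd
    exact c.symm.dvd_of_dvd_mul_left hd

theorem chF_false (f : Fin 2) (j : ℕ) : chF false f j = f := by simp [chF]

theorem chF_true (f : Fin 2) (j : ℕ) : chF true f j = f ↔ j ≠ 0 := by
  have : ∀ f : Fin 2, f + 1 ≠ f := by decide
  by_cases h : j = 0 <;> simp [chF, h]

theorem genF_mod (P : ℕ) (β : Bool) (x : ℤ) : (P : ℤ) ∣ genF P β x - x := by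
  cases β
  · exact ⟨-x, by simp [genF]; ring⟩
  · exact ⟨1 - x, by simp [genF]⟩

theorem genF_mod_m {m P : ℕ} (h : (m : ℤ) ∣ P - 1) (β : Bool) (x : ℤ) :
    (m : ℤ) ∣ genF P β x - (if β = true then 1 else 0) := by
  obtain ⟨c, hc⟩ := h
  cases β
  · exact ⟨-c * x, by simp [genF]; linear_combination (-x) * hc⟩
  · exact ⟨c * (1 - x), by simp [genF]; linear_combination (1 - x) * hc⟩

theorem lin_id_aux (k k' g g' x x' : ℤ) :
    k * g - k' * g' - k * (g - x) + k' * (g' - x') = k * x - k' * x' := by ring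

theorem lin_id_aux2 (x k y z : ℤ) : x - k * y + k * (y - z) = x - k * z := by ring

theorem core_aux {m P : ℕ} {X Γ : ℤ → Prop} (h : GoodPair m P X Γ) (hPm : (m : ℤ) ∣ P - 1)
    (β β' : Bool) (f f' : Fin 2) (x x' : ℤ)
    (hx : ¬ (P : ℤ) ∣ x) (hx' : ¬ (P : ℤ) ∣ x')
    (hβ : if β = true then X x else Γ x) (hβ' : if β' = true then X x' else Γ x')
    (a b a' b' : ℕ) (ha : a ≤ m) (hb : b ≤ m) (ha' : a' ≤ m) (hb' : b' ≤ m)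
    (hab : a ≠ b) (hab' : a' ≠ b') (h1 : chF β f a = chF β' f' a')
    (h2 : chF β f b = chF β' f' b')
    (hd : ((m * P : ℕ) : ℤ) ∣ ((a : ℤ) - b) * genF P β x - ((a' : ℤ) - b') * genF P β' x') :
    β = β' ∧ f = f' ∧ (P : ℤ) ∣ x - x' := by
  push_cast at hd
  have hdP : (P : ℤ) ∣ ((a : ℤ) - b) * x - ((a' : ℤ) - b') * x' := by
    have e1 := dvd_of_mul_left_dvd hd
    have e2 := (genF_mod P β x).mul_left ((a : ℤ) - b)
    have e3 := (genF_mod P β' x').mul_left ((a' : ℤ) - b')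
    have := dvd_add (dvd_sub e1 e2) e3
    rwa [lin_id_aux] at this
  have hdm : (m : ℤ) ∣ ((a : ℤ) - b) * (if β = true then 1 else 0) -
      ((a' : ℤ) - b') * (if β' = true then 1 else 0) := by
    have e1 := dvd_of_mul_right_dvd hd
    have e2 := (genF_mod_m hPm β x).mul_left ((a : ℤ) - b)
    have e3 := (genF_mod_m hPm β' x').mul_left ((a' : ℤ) - b')
    have := dvd_add (dvd_sub e1 e2) e3
    rwa [lin_id_aux] at this
  have hk : |(a : ℤ) - b| ≤ m := by rw [abs_le]; omega
  have hk' : |(a' : ℤ) - b'| ≤ m := by rw [abs_le]; omega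
  have hk0 : (a : ℤ) - b ≠ 0 := by omega
  have hk0' : (a' : ℤ) - b' ≠ 0 := by omega
  have hmixed : ∀ (g : Fin 2) (u v : ℕ), u ≤ m → v ≤ m → u ≠ v → chF true g u = chF true g v →
      (m : ℤ) ∣ (u : ℤ) - v → False := by
    intro g u v hu hv huv hch hdv
    have hor : (u ≠ 0 ↔ v ≠ 0) := by
      rw [← chF_true g u, ← chF_true g v, hch]
    have h3 := Int.le_of_dvd (abs_pos.2 (by omega)) ((dvd_abs _ _).2 hdv)
    rw [le_abs] at h3
    omega
  cases β <;> cases β'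
  · simp only [chF_false] at h1
    simp only [Bool.false_eq_true, if_false] at hβ hβ'
    exact ⟨rfl, h1, (h.g1 _ _ hk0 hk0' hk hk' x x' hx hβ hβ' hdP).2⟩
  · exfalso
    simp only [chF_false] at h1 h2
    simp only [Bool.false_eq_true, if_false, if_true, mul_zero, mul_one, zero_sub, dvd_neg] at hdm
    exact hmixed f' a' b' ha' hb' hab' (h1.symm.trans h2) hdm
  · exfalso
    simp only [chF_false] at h1 h2
    simp only [Bool.false_eq_true, if_false, if_true, mul_zero, mul_one, sub_zero] at hdm
    exact hmixed f a b ha hb hab (h1.trans h2.symm) hdm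
  · simp only [if_true, mul_one] at hdm hβ hβ'
    obtain ⟨e1, e2⟩ := mm_aux h hk0 hk0' hk hk' hx hx' hβ hβ' hdP hdm
    refine ⟨rfl, ?_, e2⟩
    by_contra hff
    have key : ∀ u v : ℕ, chF true f u = chF true f' v → (u ≠ 0 ↔ ¬ v ≠ 0) := by
      intro u v huv
      rw [← chF_true f u, ← chF_true f' v, huv]
      have : ∀ f f' c : Fin 2, f ≠ f' → (c = f ↔ ¬ c = f') := by decide
      exact this _ _ _ hff
    have q1 := key _ _ h1
    have q2 := key _ _ h2
    omega

theorem lower_aux (w m P : ℕ) (hw : w = m + 1) (hm : 1 ≤ m) (hPd : 2 * m ∣ P - 1)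
    (hg : GoodE m P) :
    ∃ C : Finset (Finset (Fin 2 × ZMod (m * P))),
      IsAMOPPTSMCCAC 2 (m * P) w C ∧ P + (P - 1) / m - 1 ≤ C.card := by
  classical
  obtain ⟨hP, X, Γ, h⟩ := hg
  have hPz : (0 : ℤ) < P := by exact_mod_cast hP
  have hPm : (m : ℤ) ∣ P - 1 := by
    have h1 : ((m : ℕ) : ℤ) ∣ ((P - 1 : ℕ) : ℤ) := by
      exact_mod_cast (dvd_of_mul_left_dvd hPd)
    rwa [Nat.cast_sub hP, Nat.cast_one] at h1
  set XF : Finset ℤ := (Finset.Ico 1 (P : ℤ)).filter X with hXF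
  set GF : Finset ℤ := (Finset.Ico 1 (P : ℤ)).filter Γ with hGF
  set I : Finset (Bool × Fin 2 × ℤ) := ({true} ×ˢ (Finset.univ ×ˢ XF)) ∪
    ({false} ×ˢ (Finset.univ ×ˢ GF)) with hI
  have hImem : ∀ q ∈ I, (1 ≤ q.2.2 ∧ q.2.2 < P) ∧ (if q.1 = true then X q.2.2 else Γ q.2.2) := by
    rintro ⟨β, f, x⟩ hq
    rw [hI, Finset.mem_union, Finset.mem_product, Finset.mem_product, Finset.mem_product,
      Finset.mem_product, Finset.mem_singleton, Finset.mem_singleton, hXF, hGF, Finset.mem_filter,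
      Finset.mem_filter, Finset.mem_Ico] at hq
    rcases hq with ⟨h1, _, h2, h3⟩ | ⟨h1, _, h2, h3⟩
    · simp only at h1 h2 h3
      subst h1
      simpa using ⟨h2, h3⟩
    · simp only at h1 h2 h3
      subst h1
      simpa using ⟨h2, h3⟩
  have hndv : ∀ x : ℤ, 1 ≤ x → x < P → ¬ (P : ℤ) ∣ x := by
    intro x h1 h2 hd
    have := Int.le_of_dvd (by omega) hd
    omega
  have hcard_inj : ∀ q ∈ I, ∀ a b : ℕ, a < w → b < w →
      (((a : ℤ) * genF P q.1 q.2.2 : ℤ) : ZMod (m * P)) =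
        (((b : ℤ) * genF P q.1 q.2.2 : ℤ) : ZMod (m * P)) → a = b := by
    intro q hq a b ha hb he
    by_contra hab
    obtain ⟨⟨h1, h2⟩, _⟩ := hImem q hq
    have hd : ((m * P : ℕ) : ℤ) ∣ ((a : ℤ) - b) * genF P q.1 q.2.2 := by
      rw [← ZMod.intCast_zmod_eq_zero_iff_dvd, sub_mul, Int.cast_sub, he, sub_self]
    push_cast at hd
    have hd := dvd_of_mul_left_dvd hd
    have c := h.cop ((a : ℤ) - b) (by omega) (by rw [abs_le]; omega)
    have hd := c.symm.dvd_of_dvd_mul_left hd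
    have := dvd_sub hd (genF_mod P q.1 q.2.2)
    rw [sub_sub_cancel] at this
    exact hndv _ h1 h2 this
  have hwc : ∀ q ∈ I, (wordF w (m * P) P q).card = w := by
    intro q hq
    rw [wordF, Finset.card_image_of_injOn, Finset.card_range]
    intro a ha b hb he
    simp only [Finset.coe_range, Set.mem_Iio] at ha hb
    exact hcard_inj q hq a b ha hb (Prod.ext_iff.1 he).2
  have hdis : ∀ q ∈ I, ∀ q' ∈ I, q ≠ q' → ∀ i j : Fin 2,
      Disjoint (Darr (wordF w (m * P) P q) i j) (Darr (wordF w (m * P) P q') i j) := by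
    rintro ⟨β, f, x⟩ hq ⟨β', f', x'⟩ hq' hne i j
    rw [Finset.disjoint_left]
    intro t ht ht'
    obtain ⟨a, b, ha, hb, hab, hi, hj, he⟩ := darr_wordF ht
    obtain ⟨a', b', ha', hb', hab', hi', hj', he'⟩ := darr_wordF ht'
    obtain ⟨⟨h1, h2⟩, h3⟩ := hImem _ hq
    obtain ⟨⟨h1', h2'⟩, h3'⟩ := hImem _ hq'
    simp only at *
    have hd : ((m * P : ℕ) : ℤ) ∣
        ((a : ℤ) - b) * genF P β x - ((a' : ℤ) - b') * genF P β' x' := by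
      rw [← ZMod.intCast_zmod_eq_zero_iff_dvd, Int.cast_sub, ← he, ← he', sub_self]
    obtain ⟨e1, e2, e3⟩ := core_aux h hPm β β' f f' x x' (hndv x h1 h2) (hndv x' h1' h2') h3 h3'
      a b a' b' (by omega) (by omega) (by omega) (by omega) hab hab' (hi.trans hi'.symm)
      (hj.trans hj'.symm) hd
    have e4 : x = x' := by
      have := Int.eq_zero_of_abs_lt_dvd e3 (by rw [abs_lt]; omega)
      omega
    exact hne (by rw [e1, e2, e4])
  have hDne : ∀ q ∈ I, ∃ i j, (Darr (wordF w (m * P) P q) i j).Nonempty := by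
    intro q hq
    have hmem : ∀ a : ℕ, a < w → (((a : ℤ) * genF P q.1 q.2.2 : ℤ) : ZMod (m * P)) ∈
        chan (wordF w (m * P) P q) (chF q.1 q.2.1 a) := by
      intro a ha
      rw [mem_chan, wordF]
      exact Finset.mem_image_of_mem
        (fun j : ℕ => (chF q.1 q.2.1 j, (((j : ℤ) * genF P q.1 q.2.2 : ℤ) : ZMod (m * P))))
        (Finset.mem_range.2 ha)
    refine ⟨chF q.1 q.2.1 0, chF q.1 q.2.1 1, (((0 : ℕ) : ℤ) * genF P q.1 q.2.2 : ℤ) -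
      (((1 : ℕ) : ℤ) * genF P q.1 q.2.2 : ℤ), ?_⟩
    have hin := Finset.mem_image_of_mem (fun p : ZMod (m * P) × ZMod (m * P) => p.1 - p.2)
      (Finset.mk_mem_product (hmem 0 (by omega)) (hmem 1 (by omega)))
    rw [Darr]
    split_ifs with hij
    · refine Finset.mem_erase.2 ⟨?_, hin⟩
      intro h0
      have := hcard_inj q hq 0 1 (by omega) (by omega) (sub_eq_zero.1 h0)
      omega
    · exact hin
  have hinjI : Set.InjOn (wordF w (m * P) P) I := by
    intro q hq q' hq' he
    by_contra hne
    obtain ⟨i, j, t, ht⟩ := hDne q hq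
    have hd := hdis q hq q' hq' hne i j
    rw [← he] at hd
    exact Finset.disjoint_left.1 hd ht ht
  refine ⟨I.image (wordF w (m * P) P), ⟨⟨?_, ?_⟩, ?_⟩, ?_⟩
  · intro S hS
    obtain ⟨q, hq, rfl⟩ := Finset.mem_image.1 hS
    exact hwc q hq
  · intro S hS S' hS' hne
    obtain ⟨q, hq, rfl⟩ := Finset.mem_image.1 hS
    obtain ⟨q', hq', rfl⟩ := Finset.mem_image.1 hS'
    exact hdis q hq q' hq' (fun hh => hne (by rw [hh]))
  · intro S hS t i j h1 h2
    obtain ⟨q, hq, rfl⟩ := Finset.mem_image.1 hS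
    simp only [wordF, Finset.mem_image, Finset.mem_range, Prod.mk.injEq] at h1 h2
    obtain ⟨a, ha, ha1, ha2⟩ := h1
    obtain ⟨b, hb, hb1, hb2⟩ := h2
    have := hcard_inj q hq a b ha hb (ha2.trans hb2.symm)
    rw [← ha1, ← hb1, this]
  · rw [Finset.card_image_of_injOn hinjI, hI, Finset.card_union_of_disjoint]
    · simp only [Finset.card_product, Finset.card_singleton, Finset.card_univ, Fintype.card_fin]
      have hIco : (Finset.Ico 1 (P : ℤ)).card = P - 1 := by
        rw [Int.card_Ico]; omega
      have hX2 : P - 1 ≤ XF.card + XF.card := by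
        rw [← hIco]
        have hsub : Finset.Ico 1 (P : ℤ) ⊆ XF ∪ XF.image (fun x => P - x) := by
          intro x hx
          rw [Finset.mem_Ico] at hx
          rw [Finset.mem_union]
          rcases h.x1 x (hndv x hx.1 hx.2) with hc | hc
          · left
            exact Finset.mem_filter.2 ⟨Finset.mem_Ico.2 hx, hc⟩
          · right
            refine Finset.mem_image.2 ⟨P - x, Finset.mem_filter.2 ⟨Finset.mem_Ico.2 (by omega), ?_⟩,
              by ring⟩
            exact h.perX (-x) _ ⟨-1, by ring⟩ hc
        refine (Finset.card_le_card hsub).trans ((Finset.card_union_le _ _).trans ?_)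
        exact Nat.add_le_add_left Finset.card_image_le _
      have hG2 : P - 1 ≤ 2 * m * GF.card := by
        rw [← hIco]
        set Ks : Finset ℤ := (Finset.Icc (-(m : ℤ)) m).erase 0 with hKs
        have hKc : Ks.card = 2 * m := by
          rw [hKs, Finset.card_erase_of_mem (by simp), Int.card_Icc]
          omega
        have hsub : Finset.Ico 1 (P : ℤ) ⊆ (Ks ×ˢ GF).image (fun q => (q.1 * q.2) % (P : ℤ)) := by
          intro x hx
          rw [Finset.mem_Ico] at hx
          obtain ⟨k, hk0, hk, y, hy, hd⟩ := h.g2 x (hndv x hx.1 hx.2)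
          have hmy : (P : ℤ) ∣ y - y % P := Int.dvd_self_sub_emod
          have hny : y % P ≠ 0 := by
            intro h0
            apply hndv x hx.1 hx.2
            have := dvd_add hd ((Int.dvd_of_emod_eq_zero h0).mul_left k)
            simpa using this
          have hy0 := Int.emod_nonneg y hPz.ne'
          have hyP := Int.emod_lt_of_pos y hPz
          refine Finset.mem_image.2 ⟨(k, y % P), Finset.mem_product.2 ⟨?_, ?_⟩, ?_⟩
          · rw [hKs, Finset.mem_erase, Finset.mem_Icc, ← abs_le]
            exact ⟨hk0, hk⟩
          · exact Finset.mem_filter.2 ⟨Finset.mem_Ico.2 (by simp only; omega), h.perG _ _ hmy hy⟩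
          · simp only
            have hd2 : (P : ℤ) ∣ x - k * (y % P) := by
              have := dvd_add hd (hmy.mul_left k)
              rwa [lin_id_aux2] at this
            have := (Int.emod_emod_of_dvd x (dvd_refl (P : ℤ)))
            rw [← Int.emod_emod_of_dvd _ (dvd_refl (P : ℤ)),
              ← (Int.emod_eq_emod_iff_emod_sub_eq_zero.2 (Int.emod_eq_zero_of_dvd hd2)),
              Int.emod_emod_of_dvd _ (dvd_refl (P : ℤ))]
            exact Int.emod_eq_of_lt (by omega) hx.2
        refine (Finset.card_le_card hsub).trans (Finset.card_image_le.trans ?_)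
        rw [Finset.card_product, hKc]
      obtain ⟨q, hq⟩ := hPd
      have hGq : q ≤ GF.card := by
        rw [hq] at hG2
        exact Nat.le_of_mul_le_mul_left hG2 (by omega)
      have hdiv : (P - 1) / m = 2 * q := by
        rw [hq, mul_comm 2 m, mul_assoc, Nat.mul_div_cancel_left _ (by omega)]
      rw [hdiv]
      omega
    · rw [Finset.disjoint_left]
      rintro ⟨β, f, x⟩ h1 h2
      simp only [Finset.mem_product, Finset.mem_singleton] at h1 h2
      exact absurd (h1.1.symm.trans h2.1) (by decide)

theorem mod_prod_aux (m n : ℕ) (p r : Fin n → ℕ) (h : ∀ i, p i ≡ 1 [MOD m]) :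
    ∏ i, p i ^ r i ≡ 1 [MOD m] := by
  refine Finset.prod_induction _ (fun x => x ≡ 1 [MOD m]) ?_ rfl ?_
  · intro a b ha hb
    simpa using ha.mul hb
  · intro i _
    simpa using (h i).pow (r i)

theorem stmt_13 (w n : ℕ) (hw : 2 ≤ w) (p : Fin n → ℕ) (hp : ∀ i, (p i).Prime)
    (hmono : StrictMono p) (hdvd : ∀ i, 2 * w - 2 ∣ p i - 1)
    (hCAC : ∀ i, ∃ C : Finset (Finset (ZMod (p i))),
      IsCAC (p i) w C ∧ (∀ S ∈ C, IsEquiDiff w S) ∧ C.card = (p i - 1) / (2 * w - 2))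
    (hQ1 : ∀ i, @legendreSym (p i) ⟨hp i⟩ (-1) = -1)
    (hQ2 : ∀ i, ∀ j : ℕ, 1 ≤ j → j ≤ w - 2 →
      @legendreSym (p i) ⟨hp i⟩ (j : ℤ) * @legendreSym (p i) ⟨hp i⟩ ((j : ℤ) - w + 1) = -1)
    (r : Fin n → ℕ) (hr : ∀ i, 0 < r i) :
    (∃ C : Finset (Finset (Fin 2 × ZMod ((w - 1) * ∏ i, p i ^ r i))),
      IsAMOPPTSMCCAC 2 ((w - 1) * ∏ i, p i ^ r i) w C ∧
      (∏ i, p i ^ r i) + ((∏ i, p i ^ r i) - 1) / (w - 1) - 1 ≤ C.card) ∧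
    (∀ C : Finset (Finset (Fin 2 × ZMod ((w - 1) * ∏ i, p i ^ r i))),
      IsAMOPPTSMCCAC 2 ((w - 1) * ∏ i, p i ^ r i) w C →
      C.card ≤ (∏ i, p i ^ r i) + ((∏ i, p i ^ r i) - 1) / (w - 1)) := by
  have e2 : 2 * w - 2 = 2 * (w - 1) := by omega
  have hp1 : ∀ i, 1 < p i := fun i => (hp i).one_lt
  have hP : 0 < ∏ i, p i ^ r i := Finset.prod_pos fun i _ => pow_pos (hp i).pos _
  have hmod : ∏ i, p i ^ r i ≡ 1 [MOD 2 * (w - 1)] := by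
    refine mod_prod_aux _ n p r fun i => ?_
    exact ((Nat.modEq_iff_dvd' (hp1 i).le).2 (e2 ▸ hdvd i)).symm
  have hPd : 2 * (w - 1) ∣ (∏ i, p i ^ r i) - 1 := (Nat.modEq_iff_dvd' hP).1 hmod.symm
  have hpr : ∀ q : ℕ, q.Prime → q ∣ ∏ i, p i ^ r i → 2 * (w - 1) + 1 ≤ q := by
    intro q hq hd
    obtain ⟨i, _, hi⟩ := (hq.prime.dvd_finsetProd_iff _).1 hd
    have h1 := (Nat.prime_dvd_prime_iff_eq hq (hp i)).1 (hq.dvd_of_dvd_pow hi)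
    have h2 := Nat.le_of_dvd (by have := hp1 i; omega) (hdvd i)
    have := hp1 i
    omega
  refine ⟨lower_aux w (w - 1) _ (by omega) (by omega) hPd ?_, fun C hC =>
    upper_aux w (w - 1) _ (by omega) (by omega) hP (dvd_of_mul_left_dvd hPd) hpr C hC⟩
  refine Finset.prod_induction _ (GoodE (w - 1)) (goodE_mul (w - 1)) (goodE_one _) ?_
  intro i _
  have hg : GoodE (w - 1) (p i) :=
    goodE_prime w (w - 1) (p i) (by omega) (by omega) (hp i) (e2 ▸ hdvd i) (e2 ▸ hCAC i)
      (hQ1 i) (hQ2 i)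
  induction r i with
  | zero => rw [pow_zero]; exact goodE_one _
  | succ k ih => rw [pow_succ]; exact goodE_mul _ _ _ ih hg
end

section
/- Let p_1 < p_2 < ... < p_n be primes and let w_1, ..., w_n be positive integers (not necessarily distinct) such that p_i ≥ 2w_i - 1 for each i. Suppose that for each i = 1, ..., n there exists an equi-difference CAC of length p_i and weight w_i with m_i codewords. Then for any positive integers r_1, ..., r_n there exists a mixed-weight CAC of length L = p_1^{r_1}···p_n^{r_n} with weight-set {w_1, ..., w_n} which contains, for each i = 1, ..., n, exactly m_i·(p_i^{r_i} - 1)/(p_i - 1)·Π_{j=i+1}^{n} p_j^{r_j} codewords of size w_i, and hence has Σ_{i=1}^{n} [ m_i·(p_i^{r_i} - 1)/(p_i - 1)·Π_{j=i+1}^{n} p_j^{r_j} ] codewords in total. -/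
/-- A mixed-weight conflict-avoiding code of length `L` with weight-set `W`. -/
def IsMixedCAC (L : ℕ) (W : Set ℕ) (C : Finset (Finset (ZMod L))) : Prop :=
  (∀ S ∈ C, S.card ∈ W) ∧
  ∀ S ∈ C, ∀ S' ∈ C, S ≠ S' → Disjoint (dstar S) (dstar S')

theorem mem_dstar' {L : ℕ} (S : Finset (ZMod L)) (x : ZMod L) :
    x ∈ dstar S ↔ x ≠ 0 ∧ ∃ a ∈ S, ∃ b ∈ S, a - b = x := by
  unfold dstar
  simp only [Finset.mem_erase, Finset.mem_image, Finset.mem_product, Prod.exists]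
  constructor
  · rintro ⟨h, a, b, ⟨ha, hb⟩, e⟩
    exact ⟨h, a, ha, b, hb, e⟩
  · rintro ⟨h, a, ha, b, hb, e⟩
    exact ⟨h, a, b, ⟨ha, hb⟩, e⟩

def GenSet (p w : ℕ) (G : Finset (ZMod p)) : Prop :=
  (0 : ZMod p) ∉ G ∧ ∀ g ∈ G, ∀ g' ∈ G, ∀ k k' : ℤ, k ≠ 0 → k' ≠ 0 → |k| < w → |k'| < w →
    (k : ZMod p) * g = k' * g' → g = g'

theorem int_cast_ne {p : ℕ} {k : ℤ} (hk : k ≠ 0) (h : |k| < p) : (k : ZMod p) ≠ 0 := by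
  intro h0
  rw [ZMod.intCast_zmod_eq_zero_iff_dvd] at h0
  exact hk (Int.eq_zero_of_abs_lt_dvd h0 h)

theorem exists_genSet {p w m : ℕ} (hp : p.Prime) (hw : 0 < w) (hpw : 2 * w - 1 ≤ p)
    (h : ∃ C : Finset (Finset (ZMod p)),
      IsCAC p w C ∧ (∀ S ∈ C, IsEquiDiff w S) ∧ C.card = m) :
    ∃ G : Finset (ZMod p), GenSet p w G ∧ G.card = m := by
  classical
  haveI : Fact p.Prime := ⟨hp⟩
  obtain ⟨C, ⟨hc, hd⟩, he, hm⟩ := h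
  have hp2 := hp.two_le
  rcases Nat.lt_or_ge w 2 with h1 | h2
  · have hw1 : w = 1 := by omega
    subst hw1
    have hC : C ⊆ {{0}} := by
      intro S hS
      obtain ⟨g, hg⟩ := he S hS
      simp at hg
      simp [hg]
    have hle : m ≤ 1 := by
      rw [← hm]; simpa using Finset.card_le_card hC
    have hG : ∀ G : Finset (ZMod p), (0 : ZMod p) ∉ G → GenSet p 1 G := by
      intro G h0
      refine ⟨h0, ?_⟩
      intro g _ g' _ k k' hk _ hk1
      have := Int.one_le_abs hk
      push_cast at hk1
      omega
    interval_cases m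
    · exact ⟨∅, hG _ (by simp), rfl⟩
    · exact ⟨{1}, hG _ (by simp), rfl⟩
  · have : ∀ S : Finset (ZMod p), ∃ g : ZMod p, S ∈ C →
        S = (Finset.range w).image fun j : ℕ => (j : ZMod p) * g := by
      intro S
      by_cases hS : S ∈ C
      · obtain ⟨g, hg⟩ := he S hS
        exact ⟨g, fun _ => hg⟩
      · exact ⟨0, fun h => absurd h hS⟩
    choose γ hγ using this
    have hne : ∀ S ∈ C, γ S ≠ 0 := by
      intro S hS h0
      have h3 := hγ S hS
      have h4 := hc S hS
      rw [h0] at h3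
      have : S ⊆ {0} := by
        rw [h3]; intro x; simp
        intro a _ h; exact h.symm
      have := Finset.card_le_card this
      simp at this
      omega
    have hmem : ∀ S ∈ C, ∀ k : ℤ, k ≠ 0 → |k| < w → (k : ZMod p) * γ S ∈ dstar S := by
      intro S hS k hk hkw
      rw [mem_dstar']
      refine ⟨mul_ne_zero (int_cast_ne hk (by omega)) (hne S hS), ?_⟩
      have hj : ∀ j : ℕ, j < w → (j : ZMod p) * γ S ∈ S := by
        intro j hj
        have := hγ S hS
        rw [Finset.ext_iff] at this
        rw [this]
        exact Finset.mem_image.2 ⟨j, by simpa using hj, rfl⟩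
      rw [abs_lt] at hkw
      refine ⟨_, hj k.toNat (by omega), _, hj (-k).toNat (by omega), ?_⟩
      rw [← sub_mul]
      congr 1
      have : ((k.toNat : ℤ) - ((-k).toNat : ℤ)) = k := by omega
      conv_rhs => rw [← this]
      push_cast; rfl
    refine ⟨C.image γ, ⟨?_, ?_⟩, ?_⟩
    · intro h
      obtain ⟨S, hS, h⟩ := Finset.mem_image.1 h
      exact hne S hS h
    · intro g hg g' hg' k k' hk hk' hkw hkw' e
      obtain ⟨S, hS, rfl⟩ := Finset.mem_image.1 hg
      obtain ⟨S', hS', rfl⟩ := Finset.mem_image.1 hg'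
      by_contra hcon
      have hSS : S ≠ S' := fun h => hcon (by rw [h])
      have := hmem S hS k hk hkw
      have h5 := hmem S' hS' k' hk' hkw'
      rw [← e] at h5
      exact Finset.disjoint_left.1 (hd S hS S' hS' hSS) this h5
    · rw [Finset.card_image_of_injOn, hm]
      intro S hS S' hS' e
      rw [hγ S hS, hγ S' hS', e]

def CodeP (M : ℕ) (f : ℕ → ℕ) : Prop :=
  ∃ C : Finset (Finset (ZMod M)),
    (∀ S ∈ C, ∀ S' ∈ C, S ≠ S' → Disjoint (dstar S) (dstar S')) ∧
    ∀ k, (C.filter fun S => S.card = k).card = f k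

theorem exists_embed (p M : ℕ) (hp : 0 < p) :
    ∃ φ : ZMod M →+ ZMod (p * M), Function.Injective φ ∧
      ∀ x, ZMod.castHom (dvd_mul_right p M) (ZMod p) (φ x) = 0 := by
  let f : ℤ →+ ZMod (p * M) :=
    (AddMonoidHom.mulLeft (p : ZMod (p * M))).comp (Int.castAddHom _)
  have hf : ∀ z : ℤ, f z = ((p * z : ℤ) : ZMod (p * M)) := by
    intro z; simp [f]
  have h0 : f M = 0 := by
    rw [hf]; exact_mod_cast ZMod.natCast_self (p * M)
  refine ⟨ZMod.lift M ⟨f, h0⟩, ?_, ?_⟩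
  · rw [ZMod.lift_injective]
    intro z hz
    change f z = 0 at hz
    rw [hf, ZMod.intCast_zmod_eq_zero_iff_dvd] at hz
    rw [ZMod.intCast_zmod_eq_zero_iff_dvd]
    push_cast at hz
    exact Int.dvd_of_mul_dvd_mul_left (by positivity) hz
  · intro x
    obtain ⟨z, rfl⟩ := ZMod.intCast_surjective x
    rw [ZMod.lift_coe]
    change ZMod.castHom _ _ (f z) = 0
    rw [hf]
    simp

theorem card_lift (p M : ℕ) [NeZero p] [NeZero (p * M)] (G : Finset (ZMod p)) :
    (Finset.univ.filter fun x : ZMod (p * M) =>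
      ZMod.castHom (dvd_mul_right p M) (ZMod p) x ∈ G).card = G.card * M := by
  classical
  set ρ := ZMod.castHom (dvd_mul_right p M) (ZMod p) with hρ
  have hs : Function.Surjective ρ := ZMod.castHom_surjective _
  have hfib : ∀ a b : ZMod p, (Finset.univ.filter fun x => ρ x = a).card =
      (Finset.univ.filter fun x => ρ x = b).card := by
    intro a b
    exact AddMonoidHom.card_fiber_eq_of_mem_range ρ.toAddMonoidHom (hs a) (hs b)
  have hgen : ∀ H : Finset (ZMod p), (Finset.univ.filter fun x => ρ x ∈ H).card =
      H.card * (Finset.univ.filter fun x => ρ x = 0).card := by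
    intro H
    rw [Finset.card_eq_sum_card_fiberwise (f := ρ) (t := H)]
    · rw [Finset.sum_const_nat]
      intro a ha
      rw [← hfib a 0, Finset.filter_filter]
      congr 1
      ext x
      simp
      rintro rfl; exact ha
    · intro x hx; simpa using hx
  have hu := hgen Finset.univ
  simp only [Finset.mem_univ, Finset.filter_true, Finset.card_univ, ZMod.card] at hu
  rw [hgen, ← Nat.eq_of_mul_eq_mul_left (Nat.pos_of_ne_zero (NeZero.ne p)) hu]

theorem step {p w m M : ℕ} {f : ℕ → ℕ} (hp : p.Prime) (hw : 0 < w) (hpw : 2 * w - 1 ≤ p)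
    (hM : 0 < M) (hq : ∀ q : ℕ, q.Prime → q ∣ M → p ≤ q)
    (hG : ∃ G : Finset (ZMod p), GenSet p w G ∧ G.card = m)
    (hP : CodeP M f) : CodeP (p * M) (fun k => (if w = k then m * M else 0) + f k) := by
  classical
  haveI : Fact p.Prime := ⟨hp⟩
  haveI : NeZero (p * M) := ⟨(Nat.mul_pos hp.pos hM).ne'⟩
  obtain ⟨G, ⟨hG0, hG⟩, hGm⟩ := hG
  obtain ⟨C, hC, hCf⟩ := hP
  obtain ⟨φ, hφ, hρφ⟩ := exists_embed p M hp.pos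
  have hcl := card_lift p M G
  set ρ := ZMod.castHom (dvd_mul_right p M) (ZMod p) with hρ
  set T := Finset.univ.filter fun x : ZMod (p * M) => ρ x ∈ G with hT
  have hp2 := hp.two_le
  have hTm : ∀ g, g ∈ T ↔ ρ g ∈ G := by intro g; simp [hT]
  have hT0 : ∀ g ∈ T, ρ g ≠ 0 := by
    intro g hg h
    rw [hTm, h] at hg
    exact hG0 hg
  let s : ZMod (p * M) → Finset (ZMod (p * M)) := fun g =>
    (Finset.range w).image fun j : ℕ => ((j + 1 : ℕ) : ZMod (p * M)) * g
  have hgs : ∀ g, g ∈ s g := by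
    intro g
    exact Finset.mem_image.2 ⟨0, by simpa using hw, by simp⟩
  have hscard : ∀ g ∈ T, (s g).card = w := by
    intro g hg
    rw [Finset.card_image_of_injOn, Finset.card_range]
    intro a ha b hb e
    simp only [Finset.coe_range, Set.mem_Iio] at ha hb
    have e2 := congrArg ρ e
    simp only [map_mul, map_natCast] at e2
    have e3 := mul_right_cancel₀ (hT0 g hg) e2
    rw [ZMod.natCast_eq_natCast_iff'] at e3
    by_contra hab
    have hw2 : 2 ≤ w := by omega
    rw [Nat.mod_eq_of_lt (by omega), Nat.mod_eq_of_lt (by omega)] at e3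
    omega
  have hsd : ∀ g, ∀ x ∈ dstar (s g), ∃ k : ℤ, k ≠ 0 ∧ |k| < w ∧ x = k * g := by
    intro g x hx
    rw [mem_dstar'] at hx
    obtain ⟨hx0, a, ha, b, hb, e⟩ := hx
    obtain ⟨i, hi, rfl⟩ := Finset.mem_image.1 ha
    obtain ⟨j, hj, rfl⟩ := Finset.mem_image.1 hb
    rw [Finset.mem_range] at hi hj
    refine ⟨(i : ℤ) - j, ?_, ?_, ?_⟩
    · intro h
      have : i = j := by omega
      subst this
      apply hx0; rw [← e]; ring
    · rw [abs_lt]; omega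
    · rw [← e]; push_cast; ring
  have hunit : ∀ k : ℤ, k ≠ 0 → |k| < w → IsUnit (k : ZMod (p * M)) := by
    intro k hk hkw
    have hka : k.natAbs < w := by rw [abs_lt] at hkw; omega
    have hcop : Nat.Coprime k.natAbs (p * M) := by
      apply Nat.Coprime.symm
      apply Nat.coprime_of_dvd
      intro q hqp hq1 hq2
      have hle := Nat.le_of_dvd (by omega) hq2
      have : p ≤ q := by
        rcases (Nat.Prime.dvd_mul hqp).1 hq1 with h | h
        · exact ((Nat.prime_dvd_prime_iff_eq hqp hp).1 h).ge
        · exact hq q hqp h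
      omega
    have hu := (ZMod.isUnit_iff_coprime k.natAbs (p * M)).2 hcop
    rcases Int.natAbs_eq k with h | h
    · rw [h]; simpa using hu
    · rw [h]; simpa using hu
  have hρd : ∀ g ∈ T, ∀ x ∈ dstar (s g), ρ x ≠ 0 := by
    intro g hg x hx
    obtain ⟨k, hk, hkw, rfl⟩ := hsd g x hx
    rw [map_mul]
    exact mul_ne_zero ((hunit k hk hkw).map ρ).ne_zero (hT0 g hg)
  have hdis : ∀ g ∈ T, ∀ g' ∈ T, g ≠ g' → Disjoint (dstar (s g)) (dstar (s g')) := by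
    intro g hg g' hg' hne
    rw [Finset.disjoint_left]
    intro x hx hx'
    obtain ⟨k, hk, hkw, rfl⟩ := hsd g x hx
    obtain ⟨k', hk', hkw', e⟩ := hsd g' _ hx'
    have e2 := congrArg ρ e
    simp only [map_mul, map_intCast] at e2
    have e3 := hG _ ((hTm g).1 hg) _ ((hTm g').1 hg') k k' hk hk' hkw hkw' e2
    rw [← e3] at e2
    have e4 := mul_right_cancel₀ (hT0 g hg) e2
    have e5 : k = k' := by
      by_contra hkk
      apply int_cast_ne (p := p) (sub_ne_zero.2 hkk)
      · rw [abs_lt] at *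
        omega
      · push_cast; rw [e4, sub_self]
    subst e5
    exact hne ((hunit k hk hkw).mul_left_cancel e)
  have hsinj : Set.InjOn s T := by
    intro g hg g' hg' e
    by_contra hne
    rcases Nat.lt_or_ge w 2 with h1 | h2
    · have hw1 : w = 1 := by omega
      subst hw1
      have := hgs g
      rw [e] at this
      simp [s] at this
      exact hne this
    · have hd := hdis g hg g' hg' hne
      rw [e, disjoint_self] at hd
      have : g' ∈ dstar (s g') := by
        rw [mem_dstar']
        refine ⟨?_, 2 * g', ?_, g', hgs g', by ring⟩
        · intro h; apply hT0 g' hg'; rw [h, map_zero]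
        · refine Finset.mem_image.2 ⟨1, Finset.mem_range.2 h2, ?_⟩
          norm_num
      rw [hd] at this
      simp at this
  have hφd : ∀ S : Finset (ZMod M), ∀ x ∈ dstar (S.image φ), ∃ y ∈ dstar S, φ y = x := by
    intro S x hx
    rw [mem_dstar'] at hx
    obtain ⟨hx0, a, ha, b, hb, e⟩ := hx
    obtain ⟨i, hi, rfl⟩ := Finset.mem_image.1 ha
    obtain ⟨j, hj, rfl⟩ := Finset.mem_image.1 hb
    rw [← map_sub] at e
    refine ⟨i - j, ?_, e⟩
    rw [mem_dstar']
    refine ⟨?_, i, hi, j, hj, rfl⟩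
    intro h
    apply hx0; rw [← e, h, map_zero]
  have hiinj : Function.Injective (fun S : Finset (ZMod M) => S.image φ) :=
    Finset.image_injective hφ
  have hcross : ∀ S : Finset (ZMod M), ∀ g ∈ T, Disjoint (dstar (S.image φ)) (dstar (s g)) := by
    intro S g hg
    rw [Finset.disjoint_left]
    intro x hx hx'
    obtain ⟨y, _, rfl⟩ := hφd S x hx
    exact hρd g hg _ hx' (hρφ y)
  refine ⟨T.image s ∪ C.image (fun S => S.image φ), ?_, ?_⟩
  · intro S hS S' hS' hne
    rw [Finset.mem_union, Finset.mem_image, Finset.mem_image] at hS hS'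
    rcases hS with ⟨g, hg, rfl⟩ | ⟨S, hS, rfl⟩ <;> rcases hS' with ⟨g', hg', rfl⟩ | ⟨S', hS', rfl⟩
    · exact hdis g hg g' hg' (fun h => hne (by rw [h]))
    · exact (hcross _ _ hg).symm
    · exact hcross _ _ hg'
    · rw [Finset.disjoint_left]
      intro x hx hx'
      obtain ⟨y, hy, rfl⟩ := hφd S x hx
      obtain ⟨y', hy', e⟩ := hφd S' _ hx'
      have := hφ e
      subst this
      exact Finset.disjoint_left.1 (hC S hS S' hS' (fun h => hne (by rw [h]))) hy hy'
  · intro k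
    rw [Finset.filter_union, Finset.card_union_of_disjoint]
    · congr 1
      · rw [Finset.filter_image]
        split_ifs with hk
        · rw [Finset.filter_true_of_mem (fun g hg => (hscard g hg).trans hk),
            Finset.card_image_of_injOn hsinj, hcl, hGm]
        · rw [Finset.filter_false_of_mem]
          · simp
          · intro g hg h
            exact hk ((hscard g hg).symm.trans h)
      · rw [Finset.filter_image, Finset.card_image_of_injective _ hiinj, ← hCf]
        simp only [Finset.card_image_of_injective _ hφ]
    · rw [Finset.disjoint_left]
      intro A hA hA'
      rw [Finset.mem_filter, Finset.mem_image] at hA hA'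
      obtain ⟨⟨g, hg, rfl⟩, _⟩ := hA
      obtain ⟨⟨S, hS, e⟩, _⟩ := hA'
      have := hgs g
      rw [← e] at this
      obtain ⟨y, _, hy⟩ := Finset.mem_image.1 this
      exact hT0 g hg (by rw [← hy]; exact hρφ y)

theorem step_pow {p w m M : ℕ} {f : ℕ → ℕ} (hp : p.Prime) (hw : 0 < w) (hpw : 2 * w - 1 ≤ p)
    (hM : 0 < M) (hq : ∀ q : ℕ, q.Prime → q ∣ M → p ≤ q)
    (hG : ∃ G : Finset (ZMod p), GenSet p w G ∧ G.card = m)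
    (hP : CodeP M f) (r : ℕ) :
    CodeP (p ^ r * M) (fun k => (if w = k then m * (∑ i ∈ Finset.range r, p ^ i) * M else 0) + f k) := by
  induction r with
  | zero => simpa using hP
  | succ r ih =>
    have h := step hp hw hpw (M := p ^ r * M) (Nat.mul_pos (pow_pos hp.pos r) hM) ?_ hG ih
    · convert h using 1
      · ring
      · funext k
        rw [Finset.sum_range_succ]
        split_ifs <;> ring
    · intro q hqp hqd
      rcases (Nat.Prime.dvd_mul hqp).1 hqd with h | h
      · exact ((Nat.prime_dvd_prime_iff_eq hqp hp).1 (hqp.dvd_of_dvd_pow h)).ge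
      · exact hq q hqp h

theorem main_ind (n : ℕ) (p : Fin n → ℕ) (w m : Fin n → ℕ) (hp : ∀ i, (p i).Prime)
    (hmono : StrictMono p) (hw : ∀ i, 0 < w i) (hpw : ∀ i, 2 * w i - 1 ≤ p i)
    (hG : ∀ i, ∃ G : Finset (ZMod (p i)), GenSet (p i) (w i) G ∧ G.card = m i)
    (r : Fin n → ℕ) :
    CodeP (∏ i, p i ^ r i) (fun k => ∑ i, if w i = k then
      m i * ((p i ^ r i - 1) / (p i - 1)) * ∏ j ∈ Finset.Ioi i, p j ^ r j else 0) := by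
  induction n with
  | zero => exact ⟨∅, by simp, by simp⟩
  | succ n ih =>
    have h1 := ih (fun i => p i.succ) (fun i => w i.succ) (fun i => m i.succ) (fun i => hp _)
      (fun i j hij => hmono (Fin.succ_lt_succ_iff.2 hij)) (fun i => hw _) (fun i => hpw _)
      (fun i => hG _) (fun i => r i.succ)
    have h2 := step_pow (hp 0) (hw 0) (hpw 0)
      (Finset.prod_pos fun i _ => pow_pos (hp (Fin.succ i)).pos _) ?_ (hG 0) h1 (r 0)
    · rw [Fin.prod_univ_succ]
      convert h2 using 1
      funext k
      rw [Fin.sum_univ_succ, Fin.prod_Ioi_zero, Nat.geomSum_eq (hp 0).two_le]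
      simp only [Fin.prod_Ioi_succ]
    · intro q hqp hqd
      obtain ⟨i, _, hi⟩ := (Prime.dvd_finsetProd_iff hqp.prime _).1 hqd
      rw [(Nat.prime_dvd_prime_iff_eq hqp (hp _)).1 (hqp.dvd_of_dvd_pow hi)]
      exact (hmono (Fin.succ_pos i)).le

theorem stmt_15 (n : ℕ) (p : Fin n → ℕ) (w m : Fin n → ℕ) (hp : ∀ i, (p i).Prime)
    (hmono : StrictMono p) (hw : ∀ i, 0 < w i) (hpw : ∀ i, 2 * w i - 1 ≤ p i)
    (hCAC : ∀ i, ∃ C : Finset (Finset (ZMod (p i))),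
      IsCAC (p i) (w i) C ∧ (∀ S ∈ C, IsEquiDiff (w i) S) ∧ C.card = m i)
    (r : Fin n → ℕ) (hr : ∀ i, 0 < r i) :
    ∃ C : Finset (Finset (ZMod (∏ i, p i ^ r i))),
      IsMixedCAC (∏ i, p i ^ r i) {k | ∃ i, w i = k} C ∧
      (∀ k : ℕ, (C.filter fun S => S.card = k).card =
        ∑ i ∈ Finset.univ.filter (fun i => w i = k),
          m i * ((p i ^ r i - 1) / (p i - 1)) * ∏ j ∈ Finset.Ioi i, p j ^ r j) ∧
      C.card = ∑ i, m i * ((p i ^ r i - 1) / (p i - 1)) * ∏ j ∈ Finset.Ioi i, p j ^ r j := by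
  classical
  obtain ⟨C, hC, hk⟩ := main_ind n p w m hp hmono hw hpw
    (fun i => exists_genSet (hp i) (hw i) (hpw i) (hCAC i)) r
  have hmem : ∀ S ∈ C, ∃ i, w i = S.card := by
    intro S hS
    by_contra hcon
    push Not at hcon
    have h := hk S.card
    beta_reduce at h
    rw [Finset.sum_eq_zero (fun i _ => if_neg (hcon i)), Finset.card_eq_zero] at h
    have : S ∈ C.filter fun S' => S'.card = S.card := by simp [hS]
    rw [h] at this
    simp at this
  refine ⟨C, ⟨hmem, hC⟩, ?_, ?_⟩
  · intro k
    rw [hk, Finset.sum_filter]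
  · rw [Finset.card_eq_sum_card_fiberwise (f := Finset.card) (t := Finset.univ.image w)]
    · simp only [hk]
      rw [Finset.sum_comm]
      refine Finset.sum_congr rfl fun i _ => ?_
      rw [Finset.sum_ite_eq]
      simp
    · intro S hS
      obtain ⟨i, hi⟩ := hmem S hS
      simpa using ⟨i, hi⟩
end

section
/- Let A and B be nonempty subsets of Z_L with |A - B| ≤ |A| + |B| - 2. Then the stabilizer H(A - B) satisfies 2 ≤ |H(A - B)| ≤ |A| + |B| - 2. -/
/-- The difference set `A - B = {a - b : a ∈ A, b ∈ B}` in `Z_L`. -/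
def fdiff {L : ℕ} (A B : Finset (ZMod L)) : Finset (ZMod L) :=
  (A ×ˢ B).image fun p => p.1 - p.2

/-- The stabilizer `H(T) = {h ∈ Z_L : h + T = T}` of a subset `T ⊆ Z_L`. -/
def stab {L : ℕ} [NeZero L] (T : Finset (ZMod L)) : Finset (ZMod L) :=
  Finset.univ.filter fun h => T.image (fun t => h + t) = T

section Kn
variable {L : ℕ} [NeZero L]

lemma kn_mem_stab {T : Finset (ZMod L)} {h : ZMod L} :
    h ∈ stab T ↔ ∀ x, h + x ∈ T ↔ x ∈ T := by
  unfold stab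
  simp only [Finset.mem_filter, Finset.mem_univ, true_and]
  constructor
  · intro hT x
    constructor
    · intro hx
      rw [← hT] at hx
      obtain ⟨t, ht, he⟩ := Finset.mem_image.1 hx
      rwa [← add_left_cancel he]
    · intro hx
      rw [← hT]
      exact Finset.mem_image_of_mem _ hx
  · intro hx
    apply Finset.eq_of_subset_of_card_le
    · intro y hy
      obtain ⟨t, ht, rfl⟩ := Finset.mem_image.1 hy
      exact (hx t).2 ht
    · rw [Finset.card_image_of_injective _ (add_right_injective h)]

lemma kn_mem_stab_of {T : Finset (ZMod L)} {h : ZMod L}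
    (H : ∀ x ∈ T, h + x ∈ T) : h ∈ stab T := by
  unfold stab
  simp only [Finset.mem_filter, Finset.mem_univ, true_and]
  apply Finset.eq_of_subset_of_card_le
  · intro y hy
    obtain ⟨t, ht, rfl⟩ := Finset.mem_image.1 hy
    exact H t ht
  · rw [Finset.card_image_of_injective _ (add_right_injective h)]

lemma kn_zero {T : Finset (ZMod L)} : (0 : ZMod L) ∈ stab T := by
  simp [kn_mem_stab]

lemma kn_add {T : Finset (ZMod L)} {a b : ZMod L} (ha : a ∈ stab T) (hb : b ∈ stab T) :
    a + b ∈ stab T := by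
  rw [kn_mem_stab] at *
  intro x
  rw [add_assoc, ha, hb]

lemma kn_neg {T : Finset (ZMod L)} {a : ZMod L} (ha : a ∈ stab T) :
    -a ∈ stab T := by
  rw [kn_mem_stab] at *
  intro x
  rw [← ha, add_neg_cancel_left]

lemma kn_sub {T : Finset (ZMod L)} {a b : ZMod L} (ha : a ∈ stab T) (hb : b ∈ stab T) :
    a - b ∈ stab T := by
  rw [sub_eq_add_neg]; exact kn_add ha (kn_neg hb)

/-- counting products of subsets of the two stabilizers -/
lemma kn_count (C₁ C₂ X Y Z : Finset (ZMod L)) (c : ZMod L)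
    (hX : X ⊆ stab C₁) (hY : Y ⊆ stab C₂)
    (hZ : ∀ x ∈ X, ∀ y ∈ Y, c + x + y ∈ Z) :
    X.card * Y.card ≤ (stab C₁ ∩ stab C₂).card * Z.card := by
  rw [← Finset.card_product]
  apply Finset.card_le_mul_card_image_of_maps_to (f := fun p : ZMod L × ZMod L => c + p.1 + p.2)
  · intro p hp
    have hp' := Finset.mem_product.1 hp
    exact hZ _ hp'.1 _ hp'.2
  · intro z hz
    by_cases hne : ((X ×ˢ Y).filter (fun p => c + p.1 + p.2 = z)).Nonempty
    · obtain ⟨q, hq⟩ := hne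
      rw [Finset.mem_filter, Finset.mem_product] at hq
      obtain ⟨⟨hq1, hq2⟩, hq3⟩ := hq
      apply Finset.card_le_card_of_injOn (fun p => p.1 - q.1)
      · intro p hp
        have hp := Finset.mem_coe.1 hp
        rw [Finset.mem_filter, Finset.mem_product] at hp
        obtain ⟨⟨hp1, hp2⟩, hp3⟩ := hp
        have e : p.1 - q.1 = q.2 - p.2 := by linear_combination hp3 - hq3
        refine Finset.mem_coe.2 (Finset.mem_inter.2 ⟨kn_sub (hX hp1) (hX hq1), ?_⟩)
        show p.1 - q.1 ∈ _
        rw [e]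
        exact kn_sub (hY hq2) (hY hp2)
      · intro p hp r hr he
        have hp := Finset.mem_coe.1 hp
        have hr := Finset.mem_coe.1 hr
        rw [Finset.mem_filter] at hp hr
        have e : p.1 = r.1 := sub_left_injective he
        refine Prod.ext e ?_
        linear_combination hp.2 - hr.2 - e
    · rw [Finset.not_nonempty_iff_eq_empty.1 hne]; simp

lemma kn_half (C₁ C₂ : Finset (ZMod L)) (c : ZMod L) (h2 : c ∈ C₂) (h1 : c ∉ C₁)
    (hlt : (C₂ \ C₁).card + (stab C₁ ∩ stab C₂).card < (stab C₁).card)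
    (hlt' : (C₁ \ C₂).card + (stab C₁ ∩ stab C₂).card < (stab C₂).card) :
    (stab C₂).card < (stab C₁).card := by
  classical
  set H := stab C₁ ∩ stab C₂ with hH
  let X := (stab C₁).filter (fun x => c + x ∈ C₂)
  let X' := (stab C₁).filter (fun x => ¬ (c + x ∈ C₂))
  let Y := (stab C₂).filter (fun x => ¬ (c + x ∈ C₁))
  let Y' := (stab C₂).filter (fun x => ¬ ¬ (c + x ∈ C₁))
  have eX : X.card + X'.card = (stab C₁).card := Finset.card_filter_add_card_filter_not _
  have eY : Y.card + Y'.card = (stab C₂).card := Finset.card_filter_add_card_filter_not _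
  have t1 : ∀ x ∈ stab C₁, ∀ y, c + x + y ∈ C₁ ↔ c + y ∈ C₁ := by
    intro x hx y
    rw [← kn_mem_stab.1 hx (c + y)]
    rw [show x + (c + y) = c + x + y by ring]
  have t2 : ∀ y ∈ stab C₂, ∀ x, c + x + y ∈ C₂ ↔ c + x ∈ C₂ := by
    intro y hy x
    rw [← kn_mem_stab.1 hy (c + x)]
    rw [show y + (c + x) = c + x + y by ring]
  have k1 : X.card * Y.card ≤ H.card * (C₂ \ C₁).card := by
    apply kn_count C₁ C₂ X Y _ c (Finset.filter_subset _ _) (Finset.filter_subset _ _)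
    intro x hx y hy
    obtain ⟨hx1, hx2⟩ := Finset.mem_filter.1 hx
    obtain ⟨hy1, hy2⟩ := Finset.mem_filter.1 hy
    rw [Finset.mem_sdiff, t1 x hx1, t2 y hy1]
    exact ⟨hx2, hy2⟩
  have k2 : X'.card * Y'.card ≤ H.card * (C₁ \ C₂).card := by
    apply kn_count C₁ C₂ X' Y' _ c (Finset.filter_subset _ _) (Finset.filter_subset _ _)
    intro x hx y hy
    obtain ⟨hx1, hx2⟩ := Finset.mem_filter.1 hx
    obtain ⟨hy1, hy2⟩ := Finset.mem_filter.1 hy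
    rw [Finset.mem_sdiff, t1 x hx1, t2 y hy1]
    exact ⟨not_not.1 hy2, hx2⟩
  -- any nonempty H-closed set has at least |H| elements
  have key : ∀ W : Finset (ZMod L), W.Nonempty → (∀ w ∈ W, ∀ h ∈ H, h + w ∈ W) →
      H.card ≤ W.card := by
    rintro W ⟨w, hw⟩ hc
    exact Finset.card_le_card_of_injOn (fun h => h + w) (fun h hh => hc w hw h hh)
      (fun a _ b _ e => add_right_cancel e)
  have cl1 : ∀ h ∈ H, ∀ x, (c + (h + x) ∈ C₂ ↔ c + x ∈ C₂) := by
    intro h hh x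
    rw [← t2 h (Finset.mem_inter.1 hh).2 x, show c + (h + x) = c + x + h by ring]
  have cl2 : ∀ h ∈ H, ∀ x, (c + (h + x) ∈ C₁ ↔ c + x ∈ C₁) := by
    intro h hh x
    rw [← t1 h (Finset.mem_inter.1 hh).1 x, show c + (h + x) = c + h + x by ring]
  have hX : H.card ≤ X.card := by
    apply key
    · exact ⟨0, Finset.mem_filter.2 ⟨kn_zero, by simpa using h2⟩⟩
    · intro w hw h hh
      obtain ⟨a, b⟩ := Finset.mem_filter.1 hw
      exact Finset.mem_filter.2 ⟨kn_add (Finset.mem_inter.1 hh).1 a, (cl1 h hh w).2 b⟩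
  have hY : H.card ≤ Y.card := by
    apply key
    · exact ⟨0, Finset.mem_filter.2 ⟨kn_zero, by simpa using h1⟩⟩
    · intro w hw h hh
      obtain ⟨a, b⟩ := Finset.mem_filter.1 hw
      exact Finset.mem_filter.2 ⟨kn_add (Finset.mem_inter.1 hh).2 a,
        fun q => b ((cl2 h hh w).1 q)⟩
  have hX' : X'.card = 0 ∨ H.card ≤ X'.card := by
    rcases X'.eq_empty_or_nonempty with e | e
    · left; rw [e]; rfl
    right
    apply key _ e
    intro w hw h hh
    obtain ⟨a, b⟩ := Finset.mem_filter.1 hw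
    exact Finset.mem_filter.2 ⟨kn_add (Finset.mem_inter.1 hh).1 a,
        fun q => b ((cl1 h hh w).1 q)⟩
  have hY' : Y'.card = 0 ∨ H.card ≤ Y'.card := by
    rcases Y'.eq_empty_or_nonempty with e | e
    · left; rw [e]; rfl
    right
    apply key _ e
    intro w hw h hh
    obtain ⟨a, b⟩ := Finset.mem_filter.1 hw
    exact Finset.mem_filter.2 ⟨kn_add (Finset.mem_inter.1 hh).2 a,
        fun q => b (fun r => q ((cl2 h hh w).2 r))⟩
  have hpos : 0 < H.card := Finset.card_pos.2 ⟨0, Finset.mem_inter.2 ⟨kn_zero, kn_zero⟩⟩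
  clear_value X X' Y Y' H
  generalize X.card = x at *
  generalize Y.card = y at *
  generalize X'.card = x' at *
  generalize Y'.card = y' at *
  generalize H.card = h at *
  generalize (C₂ \ C₁).card = d at *
  generalize (C₁ \ C₂).card = d' at *
  rw [← eX, ← eY] at *
  rcases hY' with e | e
  · subst e
    by_contra hcon
    nlinarith
  · rcases hX' with f | f
    · subst f
      nlinarith
    · exfalso
      nlinarith [mul_nonneg (sub_nonneg.2 (Int.ofNat_le.2 hX)) (sub_nonneg.2 (Int.ofNat_le.2 hY)),
        Nat.mul_le_mul hX hY, mul_nonneg (sub_nonneg.2 (Int.ofNat_le.2 f)) (sub_nonneg.2 (Int.ofNat_le.2 e))]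

lemma kn_union (N : ℕ) (C₁ C₂ : Finset (ZMod L))
    (h1 : N ≤ C₁.card + (stab C₁).card) (h2 : N ≤ C₂.card + (stab C₂).card) :
    N ≤ (C₁ ∪ C₂).card + (stab (C₁ ∪ C₂)).card := by
  by_cases s1 : C₁ ⊆ C₂
  · rwa [Finset.union_eq_right.2 s1]
  by_cases s2 : C₂ ⊆ C₁
  · rwa [Finset.union_eq_left.2 s2]
  obtain ⟨c, hc, hc'⟩ := Finset.not_subset.1 s2
  obtain ⟨d, hd, hd'⟩ := Finset.not_subset.1 s1
  have hle : (stab C₁ ∩ stab C₂).card ≤ (stab (C₁ ∪ C₂)).card := by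
    apply Finset.card_le_card
    intro h hh
    obtain ⟨a, b⟩ := Finset.mem_inter.1 hh
    rw [kn_mem_stab] at *
    intro x
    rw [Finset.mem_union, Finset.mem_union, a, b]
  have u1 : (C₂ \ C₁).card + C₁.card = (C₁ ∪ C₂).card := by
    rw [Finset.card_sdiff_add_card, Finset.union_comm]
  have u2 : (C₁ \ C₂).card + C₂.card = (C₁ ∪ C₂).card := Finset.card_sdiff_add_card _ _
  by_contra hcon
  have a := kn_half C₁ C₂ c hc hc' (by omega) (by omega)
  have hI : stab C₂ ∩ stab C₁ = stab C₁ ∩ stab C₂ := Finset.inter_comm _ _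
  have b := kn_half C₂ C₁ d hd hd' (by rw [hI]; omega) (by rw [hI]; omega)
  omega

lemma kn_etrans (n : ℕ) : ∀ (A B : Finset (ZMod L)) (a b : ZMod L), B.card = n → a ∈ A → b ∈ B →
    ∃ C : Finset (ZMod L), a + b ∈ C ∧ (∀ x ∈ C, ∃ p ∈ A, ∃ q ∈ B, x = p + q) ∧
      A.card + B.card ≤ C.card + (stab C).card := by
  induction n using Nat.strong_induction_on with
  | _ n ih =>
  intro A B a b hn ha hb
  by_cases hall : ∀ e ∈ A, ∀ y ∈ B, y + (e - b) ∈ A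
  · refine ⟨A.image (fun x => x + b), Finset.mem_image_of_mem _ ha, ?_, ?_⟩
    · intro x hx
      obtain ⟨p, hp, rfl⟩ := Finset.mem_image.1 hx
      exact ⟨p, hp, b, hb, rfl⟩
    · rw [Finset.card_image_of_injective _ (add_left_injective b)]
      apply Nat.add_le_add_left
      apply Finset.card_le_card_of_injOn (fun y => y - b)
      · intro y hy
        apply Finset.mem_coe.2
        apply kn_mem_stab_of
        intro x hx
        obtain ⟨p, hp, rfl⟩ := Finset.mem_image.1 hx
        refine Finset.mem_image.2 ⟨_, hall p hp y hy, ?_⟩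
        ring
      · intro p _ q _ e
        exact sub_left_injective e
  · push Not at hall
    obtain ⟨e, he, y, hy, hye⟩ := hall
    let A' := A ∪ B.image (fun y => y + (e - b))
    let B' := B.filter (fun y => y + (e - b) ∈ A)
    have hlt : B'.card < n := by
      rw [← hn]
      apply Finset.card_lt_card
      refine Finset.filter_ssubset.2 ⟨y, hy, hye⟩
    obtain ⟨C, h1, h2, h3⟩ := ih _ hlt A' B' a b rfl (Finset.mem_union_left _ ha)
      (Finset.mem_filter.2 ⟨hb, by simpa using he⟩)
    refine ⟨C, h1, ?_, ?_⟩
    · intro x hx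
      obtain ⟨p, hp, q, hq, rfl⟩ := h2 x hx
      obtain ⟨hq1, hq2⟩ := Finset.mem_filter.1 hq
      rcases Finset.mem_union.1 hp with hp | hp
      · exact ⟨p, hp, q, hq1, rfl⟩
      · obtain ⟨r, hr, rfl⟩ := Finset.mem_image.1 hp
        exact ⟨_, hq2, r, hr, by ring⟩
    · refine le_trans ?_ h3
      have i1 := Finset.card_union_add_card_inter A (B.image (fun y => y + (e - b)))
      rw [Finset.card_image_of_injective _ (add_left_injective (e - b))] at i1
      have i2 : (A ∩ B.image (fun y => y + (e - b))).card ≤ B'.card := by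
        rw [← Finset.card_image_of_injective B' (add_left_injective (e - b))]
        apply Finset.card_le_card
        intro x hx
        obtain ⟨hx1, hx2⟩ := Finset.mem_inter.1 hx
        obtain ⟨r, hr, rfl⟩ := Finset.mem_image.1 hx2
        exact Finset.mem_image.2 ⟨r, Finset.mem_filter.2 ⟨hr, hx1⟩, rfl⟩
      show _ ≤ (A ∪ B.image (fun y => y + (e - b))).card + _
      omega

lemma kn_cover (N : ℕ) (S : Finset (ZMod L)) (hS : S.Nonempty)
    (H : ∀ x ∈ S, ∃ C, x ∈ C ∧ C ⊆ S ∧ N ≤ C.card + (stab C).card) :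
    N ≤ S.card + (stab S).card := by
  classical
  let F := S.powerset.filter (fun C => N ≤ C.card + (stab C).card)
  have hF : F.Nonempty := by
    obtain ⟨x, hx⟩ := hS
    obtain ⟨C, _, h2, h3⟩ := H x hx
    exact ⟨C, Finset.mem_filter.2 ⟨Finset.mem_powerset.2 h2, h3⟩⟩
  obtain ⟨U, hU, hmax⟩ := Finset.exists_max_image F Finset.card hF
  obtain ⟨hU1, hU2⟩ := Finset.mem_filter.1 hU
  rw [Finset.mem_powerset] at hU1
  have : U = S := by
    apply Finset.Subset.antisymm hU1
    intro x hx
    obtain ⟨C, h1, h2, h3⟩ := H x hx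
    have := hmax (U ∪ C) (Finset.mem_filter.2
      ⟨Finset.mem_powerset.2 (Finset.union_subset hU1 h2), kn_union N U C hU2 h3⟩)
    have e := Finset.eq_of_subset_of_card_le Finset.subset_union_left this
    rw [e]
    exact Finset.mem_union_right _ h1
  rwa [this] at hU2

end Kn

theorem stmt_16 (L : ℕ) [NeZero L] (A B : Finset (ZMod L))
    (hA : A.Nonempty) (hB : B.Nonempty)
    (hexc : (fdiff A B).card ≤ A.card + B.card - 2) :
    2 ≤ (stab (fdiff A B)).card ∧ (stab (fdiff A B)).card ≤ A.card + B.card - 2 := by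
  have hne : (fdiff A B).Nonempty := (hA.product hB).image _
  constructor
  · have hk : A.card + B.card ≤ (fdiff A B).card + (stab (fdiff A B)).card := by
      apply kn_cover _ _ hne
      intro x hx
      obtain ⟨p, hp, rfl⟩ := Finset.mem_image.1 hx
      obtain ⟨ha, hb⟩ := Finset.mem_product.1 hp
      obtain ⟨C, h1, h2, h3⟩ := kn_etrans _ A (B.image (fun y => -y)) p.1 (-p.2) rfl ha
        (Finset.mem_image_of_mem _ hb)
      rw [Finset.card_image_of_injective _ neg_injective] at h3
      refine ⟨C, by simpa [sub_eq_add_neg] using h1, ?_, h3⟩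
      intro z hz
      obtain ⟨u, hu, v, hv, rfl⟩ := h2 z hz
      obtain ⟨w, hw, rfl⟩ := Finset.mem_image.1 hv
      exact Finset.mem_image.2 ⟨(u, w), Finset.mem_product.2 ⟨hu, hw⟩, by ring⟩
    have := hA.card_pos
    have := hB.card_pos
    omega
  · refine le_trans ?_ hexc
    obtain ⟨t, ht⟩ := hne
    exact Finset.card_le_card_of_injOn (fun h => h + t)
      (fun h hh => (kn_mem_stab.1 hh t).2 ht) (fun a _ b _ e => add_right_cancel e)
end

section
/- Let A and B be nonempty subsets of Z_L with |A - B| ≤ |A| + |B| - 2. Then |H(A - B)| does not divide |A| + |B| - 1. -/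
theorem mem_stab' {L : ℕ} [NeZero L] (T : Finset (ZMod L)) (h : ZMod L) :
    h ∈ stab T ↔ ∀ t, h + t ∈ T ↔ t ∈ T := by
  unfold stab
  rw [Finset.mem_filter]
  constructor
  · rintro ⟨-, h1⟩ t
    constructor
    · intro ht
      rw [← h1, Finset.mem_image] at ht
      obtain ⟨s, hs, hst⟩ := ht
      rwa [← add_left_cancel hst]
    · intro ht
      rw [← h1]
      exact Finset.mem_image_of_mem _ ht
  · intro h1
    refine ⟨Finset.mem_univ _, ?_⟩
    ext x
    rw [Finset.mem_image]
    constructor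
    · rintro ⟨t, ht, rfl⟩
      exact (h1 t).2 ht
    · intro hx
      refine ⟨x - h, ?_, by ring⟩
      rw [← h1]
      simpa using hx

theorem stab_of_sub {L : ℕ} [NeZero L] (T : Finset (ZMod L)) (h : ZMod L)
    (hh : ∀ t ∈ T, h + t ∈ T) : h ∈ stab T := by
  unfold stab
  rw [Finset.mem_filter]
  refine ⟨Finset.mem_univ _, ?_⟩
  apply Finset.eq_of_subset_of_card_le
  · intro x hx
    obtain ⟨t, ht, rfl⟩ := Finset.mem_image.1 hx
    exact hh t ht
  · rw [Finset.card_image_of_injective _ (add_right_injective h)]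

theorem stab_zero {L : ℕ} [NeZero L] (T : Finset (ZMod L)) : (0 : ZMod L) ∈ stab T := by
  rw [mem_stab']; simp

theorem stab_add {L : ℕ} [NeZero L] {T : Finset (ZMod L)} {x y : ZMod L}
    (hx : x ∈ stab T) (hy : y ∈ stab T) : x + y ∈ stab T := by
  rw [mem_stab'] at *
  intro t
  rw [add_assoc, hx, hy]

theorem stab_neg {L : ℕ} [NeZero L] {T : Finset (ZMod L)} {x : ZMod L}
    (hx : x ∈ stab T) : -x ∈ stab T := by
  rw [mem_stab'] at *
  intro t
  rw [← hx]; simp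

theorem stab_sub {L : ℕ} [NeZero L] {T : Finset (ZMod L)} {x y : ZMod L}
    (hx : x ∈ stab T) (hy : y ∈ stab T) : x - y ∈ stab T := by
  rw [sub_eq_add_neg]; exact stab_add hx (stab_neg hy)

theorem stab_dvd {L : ℕ} [NeZero L] (S : Finset (ZMod L)) (n : ℕ) :
    ∀ T : Finset (ZMod L), T.card = n → (∀ h ∈ stab S, ∀ t ∈ T, h + t ∈ T) →
      (stab S).card ∣ T.card := by
  induction n using Nat.strong_induction_on with
  | _ n ih =>
    intro T hT hs
    rcases T.eq_empty_or_nonempty with rfl | ⟨t, ht⟩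
    · simp
    · have hsub : (stab S).image (fun h => h + t) ⊆ T := by
        intro x hx
        obtain ⟨h, hh, rfl⟩ := Finset.mem_image.1 hx
        exact hs h hh t ht
      have hc : ((stab S).image (fun h => h + t)).card = (stab S).card :=
        Finset.card_image_of_injective _ (add_left_injective t)
      have h0 : 0 < (stab S).card := Finset.card_pos.2 ⟨0, stab_zero S⟩
      have hcard := Finset.card_sdiff_add_card_eq_card hsub
      rw [← hcard, hc]
      refine Dvd.dvd.add ?_ dvd_rfl
      refine ih _ ?_ _ rfl ?_
      · omega
      · intro h hh x hx
        rw [Finset.mem_sdiff] at hx ⊢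
        refine ⟨hs h hh x hx.1, fun hx' => hx.2 ?_⟩
        obtain ⟨g, hg, hgx⟩ := Finset.mem_image.1 hx'
        refine Finset.mem_image.2 ⟨g - h, stab_sub hg hh, ?_⟩
        linear_combination hgx

theorem grid_card {L : ℕ} [NeZero L] (C₁ C₂ X Y Z : Finset (ZMod L)) (c : ZMod L)
    (hX : X ⊆ stab C₂) (hY : Y ⊆ stab C₁)
    (hZ : ∀ x ∈ X, ∀ y ∈ Y, c + x + y ∈ Z) :
    X.card * Y.card ≤ (stab C₁ ∩ stab C₂).card * Z.card := by
  rw [← Finset.card_product]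
  refine Finset.card_le_mul_card_image_of_maps_to (f := fun p => c + p.1 + p.2) ?_ _ ?_
  · intro p hp
    rw [Finset.mem_product] at hp
    exact hZ _ hp.1 _ hp.2
  · intro z _
    rcases (Finset.filter (fun p : ZMod L × ZMod L => c + p.1 + p.2 = z) (X ×ˢ Y)).eq_empty_or_nonempty
      with he | ⟨⟨x0, y0⟩, h0⟩
    · rw [he]; simp
    · simp only [Finset.mem_filter, Finset.mem_product] at h0
      refine Finset.card_le_card_of_injOn (fun p => p.1 - x0) ?_ ?_
      · rintro ⟨x, y⟩ hp
        simp only [Finset.mem_coe, Finset.mem_filter, Finset.mem_product] at hp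
        simp only [Finset.mem_coe, Finset.mem_inter]
        refine ⟨?_, stab_sub (hX hp.1.1) (hX h0.1.1)⟩
        have : x - x0 = y0 - y := by linear_combination hp.2 - h0.2
        rw [this]
        exact stab_sub (hY h0.1.2) (hY hp.1.2)
      · rintro ⟨x, y⟩ hp ⟨x', y'⟩ hp' hxx
        simp only [Finset.mem_coe, Finset.mem_filter, Finset.mem_product] at hp hp' hxx
        have h1 : x = x' := by linear_combination hxx
        have h2 : y = y' := by linear_combination hp.2 - hp'.2 - h1
        rw [h1, h2]

theorem coset_card {L : ℕ} [NeZero L] (K X : Finset (ZMod L)) (hX : X.Nonempty)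
    (h : ∀ k ∈ K, ∀ x ∈ X, k + x ∈ X) : K.card ≤ X.card := by
  obtain ⟨x, hx⟩ := hX
  exact Finset.card_le_card_of_injOn (fun k => k + x) (fun k hk => h k hk x hx)
    ((add_left_injective x).injOn)

theorem arith_aux (k m1 m2 P Q u q D E : ℕ) (hk : 0 < k) (hm : m1 ≤ m2)
    (hPQ : Q + P = m2) (huq : q + u = m1) (hP : k ≤ P) (hu : k ≤ u)
    (hQ : Q = 0 ∨ k ≤ Q) (h1 : P * u ≤ k * D) (h2 : Q * q ≤ k * E) :
    m1 ≤ D + k ∨ m2 ≤ E + k := by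
  have key : ∀ a b d : ℕ, k ≤ a → k ≤ b → a * b ≤ k * d → a + b ≤ d + k := by
    intro a b d ha hb hd
    obtain ⟨a, rfl⟩ := Nat.exists_eq_add_of_le ha
    obtain ⟨b, rfl⟩ := Nat.exists_eq_add_of_le hb
    have : k * (k + a + b) ≤ k * d := by nlinarith
    have := Nat.le_of_mul_le_mul_left this hk
    omega
  have h3 := key _ _ _ hP hu h1
  by_cases hc : q ≤ P
  · left; omega
  · right
    rcases hQ with hQ | hQ
    · omega
    · have := key _ _ _ hQ (by omega : k ≤ q) h2
      omega

theorem union_aux {L : ℕ} [NeZero L] (C₁ C₂ : Finset (ZMod L)) (n : ℕ)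
    (hm : (stab C₁).card ≤ (stab C₂).card) (h1 : n ≤ C₁.card + (stab C₁).card)
    (h2 : n ≤ C₂.card + (stab C₂).card) :
    n ≤ (C₁ ∪ C₂).card + (stab (C₁ ∪ C₂)).card := by
  by_cases hsub : C₂ ⊆ C₁
  · rwa [Finset.union_eq_left.2 hsub]
  obtain ⟨c, hc2, hc1⟩ := Finset.not_subset.1 hsub
  have hK : (stab C₁ ∩ stab C₂).card ≤ (stab (C₁ ∪ C₂)).card := by
    apply Finset.card_le_card
    intro x hx
    rw [Finset.mem_inter, mem_stab', mem_stab'] at hx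
    rw [mem_stab']
    intro t
    rw [Finset.mem_union, Finset.mem_union, hx.1, hx.2]
  have hK0 : 0 < (stab C₁ ∩ stab C₂).card :=
    Finset.card_pos.2 ⟨0, Finset.mem_inter.2 ⟨stab_zero _, stab_zero _⟩⟩
  have e1 : (C₁ ∪ C₂).card = C₁.card + (C₂ \ C₁).card := by
    rw [Finset.union_comm, ← Finset.card_sdiff_add_card C₂ C₁]; omega
  have e2 : (C₁ ∪ C₂).card = C₂.card + (C₁ \ C₂).card := by
    rw [← Finset.card_sdiff_add_card C₁ C₂]; omega
  have tr1 : ∀ y ∈ stab C₁, ∀ t, t + y ∈ C₁ ↔ t ∈ C₁ := by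
    intro y hy t; rw [add_comm]; exact (mem_stab' _ _).1 hy t
  have tr2 : ∀ y ∈ stab C₂, ∀ t, t + y ∈ C₂ ↔ t ∈ C₂ := by
    intro y hy t; rw [add_comm]; exact (mem_stab' _ _).1 hy t
  have sh1 : ∀ k ∈ stab C₁, ∀ x, c + (k + x) ∈ C₁ ↔ c + x ∈ C₁ := by
    intro k hk x; rw [← tr1 k hk (c + x)]; ring_nf
  have sh2 : ∀ k ∈ stab C₂, ∀ x, c + (k + x) ∈ C₂ ↔ c + x ∈ C₂ := by
    intro k hk x; rw [← tr2 k hk (c + x)]; ring_nf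
  have sw : ∀ x y, c + x + y = c + y + x := by intro x y; ring
  have := arith_aux (stab C₁ ∩ stab C₂).card (stab C₁).card (stab C₂).card
    ((stab C₂).filter (fun x => ¬ c + x ∈ C₁)).card ((stab C₂).filter (fun x => c + x ∈ C₁)).card
    ((stab C₁).filter (fun x => c + x ∈ C₂)).card ((stab C₁).filter (fun x => ¬ c + x ∈ C₂)).card
    (C₂ \ C₁).card (C₁ \ C₂).card hK0 hm
    (Finset.card_filter_add_card_filter_not _)
    (by rw [add_comm]; exact Finset.card_filter_add_card_filter_not _)
    (by
      apply coset_card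
      · exact ⟨0, by simp [stab_zero, hc1]⟩
      · intro k hk x hx
        rw [Finset.mem_inter] at hk
        rw [Finset.mem_filter] at hx ⊢
        exact ⟨stab_add hk.2 hx.1, by rw [sh1 k hk.1]; exact hx.2⟩)
    (by
      apply coset_card
      · exact ⟨0, by simp [stab_zero, hc2]⟩
      · intro k hk x hx
        rw [Finset.mem_inter] at hk
        rw [Finset.mem_filter] at hx ⊢
        exact ⟨stab_add hk.1 hx.1, by rw [sh2 k hk.2]; exact hx.2⟩)
    (by
      rcases ((stab C₂).filter (fun x => c + x ∈ C₁)).eq_empty_or_nonempty with he | hne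
      · left; rw [he]; rfl
      · right
        apply coset_card _ _ hne
        intro k hk x hx
        rw [Finset.mem_inter] at hk
        rw [Finset.mem_filter] at hx ⊢
        exact ⟨stab_add hk.2 hx.1, by rw [sh1 k hk.1]; exact hx.2⟩)
    (by
      apply grid_card _ _ _ _ _ c (Finset.filter_subset _ _) (Finset.filter_subset _ _)
      intro x hx y hy
      rw [Finset.mem_filter] at hx hy
      rw [Finset.mem_sdiff, tr1 y hy.1, sw, tr2 x hx.1]
      exact ⟨hy.2, hx.2⟩)
    (by
      apply grid_card _ _ _ _ _ c (Finset.filter_subset _ _) (Finset.filter_subset _ _)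
      intro x hx y hy
      rw [Finset.mem_filter] at hx hy
      rw [Finset.mem_sdiff, tr1 y hy.1, sw, tr2 x hx.1]
      exact ⟨hx.2, hy.2⟩)
  omega

theorem union_stab {L : ℕ} [NeZero L] (C₁ C₂ : Finset (ZMod L)) (n : ℕ)
    (h1 : n ≤ C₁.card + (stab C₁).card) (h2 : n ≤ C₂.card + (stab C₂).card) :
    n ≤ (C₁ ∪ C₂).card + (stab (C₁ ∪ C₂)).card := by
  rcases le_total (stab C₁).card (stab C₂).card with h | h
  · exact union_aux _ _ _ h h1 h2
  · rw [Finset.union_comm]; exact union_aux _ _ _ h h2 h1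

theorem local_kneser {L : ℕ} [NeZero L] (S : Finset (ZMod L)) (a b : ZMod L) (n : ℕ) :
    ∀ A B : Finset (ZMod L), B.card = n → a ∈ A → b ∈ B → (∀ x ∈ A, ∀ y ∈ B, x + y ∈ S) →
      ∃ C ⊆ S, a + b ∈ C ∧ A.card + B.card ≤ C.card + (stab C).card := by
  induction n using Nat.strong_induction_on with
  | _ n ih =>
    intro A B hn ha hb hS
    by_cases hex : ∃ e, e + b ∈ A ∧ ∃ y ∈ B, e + y ∉ A
    · obtain ⟨e, heb, y, hy, hey⟩ := hex
      have hlt : (B.filter (fun y => e + y ∈ A)).card < B.card :=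
        Finset.card_lt_card (Finset.filter_ssubset.2 ⟨y, hy, hey⟩)
      obtain ⟨C, hCS, hC, hcard⟩ := ih _ (hn ▸ hlt) (A ∪ (B.image (fun y => e + y)))
        (B.filter (fun y => e + y ∈ A)) rfl (Finset.mem_union_left _ ha)
        (Finset.mem_filter.2 ⟨hb, heb⟩) (by
          intro x hx z hz
          rw [Finset.mem_filter] at hz
          rcases Finset.mem_union.1 hx with hx | hx
          · exact hS x hx z hz.1
          · obtain ⟨w, hw, rfl⟩ := Finset.mem_image.1 hx
            have := hS _ hz.2 w hw
            rwa [add_right_comm] at this)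
      refine ⟨C, hCS, hC, le_trans ?_ hcard⟩
      have e1 : (B.image (fun y => e + y)).card = B.card :=
        Finset.card_image_of_injective _ (add_right_injective e)
      have e2 := Finset.card_union_add_card_inter A (B.image (fun y => e + y))
      have e3 : (A ∩ B.image (fun y => e + y)).card ≤ (B.filter (fun y => e + y ∈ A)).card := by
        rw [← Finset.card_image_of_injective (B.filter (fun y => e + y ∈ A)) (add_right_injective e)]
        apply Finset.card_le_card
        intro x hx
        rw [Finset.mem_inter] at hx
        obtain ⟨w, hw, rfl⟩ := Finset.mem_image.1 hx.2
        exact Finset.mem_image_of_mem _ (Finset.mem_filter.2 ⟨hw, hx.1⟩)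
      omega
    · push Not at hex
      refine ⟨A.image (fun x => x + b), ?_, Finset.mem_image_of_mem _ ha, ?_⟩
      · intro x hx
        obtain ⟨w, hw, rfl⟩ := Finset.mem_image.1 hx
        exact hS w hw b hb
      · rw [Finset.card_image_of_injective _ (add_left_injective b)]
        apply Nat.add_le_add_left
        refine Finset.card_le_card_of_injOn (fun y => y - b) ?_ ((sub_left_injective).injOn)
        intro y hy
        apply stab_of_sub
        intro t ht
        obtain ⟨w, hw, rfl⟩ := Finset.mem_image.1 ht
        refine Finset.mem_image.2 ⟨w - b + y, hex (w - b) (by simpa using hw) y hy, by ring⟩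

theorem weak_kneser {L : ℕ} [NeZero L] (A B : Finset (ZMod L)) (hA : A.Nonempty)
    (hB : B.Nonempty) :
    A.card + B.card ≤ (fdiff A B).card + (stab (fdiff A B)).card := by
  have hloc : ∀ s ∈ fdiff A B, ∃ C ⊆ fdiff A B, s ∈ C ∧
      A.card + B.card ≤ C.card + (stab C).card := by
    intro s hs
    obtain ⟨⟨a, b⟩, hp, rfl⟩ := Finset.mem_image.1 hs
    rw [Finset.mem_product] at hp
    have := local_kneser (fdiff A B) a (-b) _ A (B.image (fun y => -y)) rfl hp.1
      (Finset.mem_image_of_mem _ hp.2) (by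
        intro x hx y hy
        obtain ⟨w, hw, rfl⟩ := Finset.mem_image.1 hy
        exact Finset.mem_image.2 ⟨(x, w), Finset.mem_product.2 ⟨hx, hw⟩, by ring⟩)
    rw [Finset.card_image_of_injective _ neg_injective] at this
    simpa only [sub_eq_add_neg] using this
  obtain ⟨a, ha⟩ := hA
  obtain ⟨b, hb⟩ := hB
  have h0 : a - b ∈ fdiff A B :=
    Finset.mem_image.2 ⟨(a, b), Finset.mem_product.2 ⟨ha, hb⟩, rfl⟩
  obtain ⟨C0, hC0, -, hC0'⟩ := hloc _ h0
  obtain ⟨C, hC, hmax⟩ := Finset.exists_max_image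
    ((fdiff A B).powerset.filter (fun C => A.card + B.card ≤ C.card + (stab C).card))
    Finset.card ⟨C0, Finset.mem_filter.2 ⟨Finset.mem_powerset.2 hC0, hC0'⟩⟩
  rw [Finset.mem_filter, Finset.mem_powerset] at hC
  have : C = fdiff A B := by
    apply Finset.Subset.antisymm hC.1
    intro s hs
    obtain ⟨D, hD, hsD, hD'⟩ := hloc s hs
    have h1 := hmax (C ∪ D) (Finset.mem_filter.2 ⟨Finset.mem_powerset.2
      (Finset.union_subset hC.1 hD), union_stab _ _ _ hC.2 hD'⟩)
    have h2 := Finset.eq_of_subset_of_card_le Finset.subset_union_left h1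
    rw [h2]
    exact Finset.mem_union_right _ hsD
  rw [← this]
  exact hC.2

theorem stmt_17 (L : ℕ) [NeZero L] (A B : Finset (ZMod L))
    (hA : A.Nonempty) (hB : B.Nonempty)
    (hexc : (fdiff A B).card ≤ A.card + B.card - 2) :
    ¬ (stab (fdiff A B)).card ∣ A.card + B.card - 1 := by
  intro hd
  have hk := weak_kneser A B hA hB
  have h2 := stab_dvd (fdiff A B) _ (fdiff A B) rfl
    (fun h hh t ht => ((mem_stab' _ _).1 hh t).2 ht)
  have hA' := Finset.card_pos.2 hA
  have hB' := Finset.card_pos.2 hB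
  have h3 := Nat.le_of_dvd (by omega) (Nat.dvd_sub hd h2)
  omega
end

section
/- Let M, L, w be positive integers and let S be a w-element subset of {1,...,M} × Z_L, and for i ∈ {1,...,M} write S_i = {t ∈ Z_L : (i,t) ∈ S}. If every prime factor of L is at least 2w - 1, then S is not exceptional; that is, there is no index i with |S_i - S_i| ≤ 2|S_i| - 2, and there are no distinct indices i, j with |S_i - S_j| ≤ |S_i| + |S_j| - 2. -/
open scoped Pointwise in
theorem aux_cd (L w : ℕ) (hL : 0 < L)
    (hprime : ∀ p : ℕ, p.Prime → p ∣ L → 2 * w - 1 ≤ p)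
    (A B : Finset (ZMod L)) (hA : A.Nonempty) (hB : B.Nonempty)
    (hAw : A.card ≤ w) (hBw : B.card ≤ w) :
    A.card + B.card - 1 ≤ (fdiff A B).card := by
  have hm : ((2 * w - 1 : ℕ) : ℕ∞) ≤ AddMonoid.minOrder (ZMod L) := by
    rcases eq_or_ne L 1 with rfl | h1
    · rw [AddMonoid.le_minOrder]
      intro a ha _
      exact absurd (Subsingleton.elim a 0) ha
    · rw [ZMod.minOrder hL.ne' h1, Nat.cast_le]
      exact hprime _ (Nat.minFac_prime h1) (Nat.minFac_dvd L)
  have h := cauchy_davenport_minOrder_add hA hB.neg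
  have he : fdiff A B = A + -B := by
    ext x
    simp only [fdiff, Finset.mem_image, Finset.mem_product, Prod.exists, ← sub_eq_add_neg,
      Finset.mem_sub]
    constructor
    · rintro ⟨a, b, ⟨ha, hb⟩, h⟩
      exact ⟨a, ha, b, hb, h⟩
    · rintro ⟨a, ha, b, hb, h⟩
      exact ⟨a, b, ⟨ha, hb⟩, h⟩
  rw [he]
  rw [Finset.card_neg] at h
  have h2 : ((A.card + B.card - 1 : ℕ) : ℕ∞) ≤ ((2 * w - 1 : ℕ) : ℕ∞) := by
    rw [Nat.cast_le]; omega
  rw [min_eq_right (h2.trans hm), Nat.cast_le] at h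
  exact h

theorem aux_chan {M L : ℕ} (S : Finset (Fin M × ZMod L)) (i : Fin M) :
    (chan S i).card ≤ S.card :=
  Finset.card_image_le.trans (Finset.card_filter_le _ _)

theorem stmt_19 (M L w : ℕ) (hM : 0 < M) (hL : 0 < L) (hw : 0 < w)
    (hprime : ∀ p : ℕ, p.Prime → p ∣ L → 2 * w - 1 ≤ p)
    (S : Finset (Fin M × ZMod L)) (hS : S.card = w) :
    (∀ i : Fin M,
      ¬ ((fdiff (chan S i) (chan S i)).card : ℤ) ≤ 2 * ((chan S i).card : ℤ) - 2) ∧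
    (∀ i j : Fin M, i ≠ j → (chan S i).Nonempty → (chan S j).Nonempty →
      ¬ ((fdiff (chan S i) (chan S j)).card : ℤ) ≤
          ((chan S i).card : ℤ) + ((chan S j).card : ℤ) - 2) := by
  subst hS
  constructor
  · intro i
    rcases (chan S i).eq_empty_or_nonempty with h | h
    · simp only [h, Finset.card_empty]
      omega
    · have := aux_cd L _ hL hprime _ _ h h (aux_chan S i) (aux_chan S i)
      have := h.card_pos
      omega
  · intro i j _ h h'
    have := aux_cd L _ hL hprime _ _ h h' (aux_chan S i) (aux_chan S j)
    have := h.card_pos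
    omega
end
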